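/- arXiv:1610.04158 — 3 statements merged into one kernel-verified Lean document; each statement's English description precedes it below -/
import Mathlib

section
/- Diagonal values of the boundary term: for all τ, s ∈ [0,1], φ_τ(s,s) = 2·min{s, 1−s, τ, 1−τ}. Equivalently: φ_τ(s,s) = 2s if s ≤ min{τ,1−τ}; φ_τ(s,s) = 2·min{τ,1−τ} if min{τ,1−τ} ≤ s ≤ max{τ,1−τ}; and φ_τ(s,s) = 2(1−s) if s ≥ max{τ,1−τ}. -/
/-!
On the circle `ℝ / ℤ` the arc `[-τ, x - τ]` has length `x`, so `φ_τ(x, y) = x + y - 2 λ(overlap)`,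
where the overlap with `[0, y]` consists of two intervals. For `x = y = s` these have lengths `a⁺`
and `b⁺` with `a = s - τ` and `b = s - (1 - τ)`. Since `a⁺ + b⁺ = max {a, b, a + b, 0}` and
`a + b = s - (1 - s)`, the difference `s - (a⁺ + b⁺)` is `min {τ, 1 - τ, 1 - s, s}`.
-/

open MeasureTheory Set

noncomputable section

/-- The boundary term `φ_τ(x,y) = λ( [0,1] ∩ ( ([−τ,x−τ] ∪ [1−τ,x+1−τ]) Δ [0,y] ) )`. -/
def phi (τ x y : ℝ) : ℝ :=
  (volume (Set.Icc (0 : ℝ) 1 ∩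
    symmDiff (Set.Icc (-τ) (x - τ) ∪ Set.Icc (1 - τ) (x + 1 - τ)) (Set.Icc 0 y))).toReal

lemma max_zero_add_max_zero {α : Type*} [AddCommGroup α] [LinearOrder α] [IsOrderedAddMonoid α]
    (a b : α) : max a 0 + max b 0 = max (max a b) (max (a + b) 0) := by
  simp only [max_add, add_max, add_zero, zero_add]
  ac_rfl

lemma Icc_aedisjoint_Icc {α : Type*} [PartialOrder α] [MeasurableSpace α] {μ : Measure α}
    [NullSingletonClass μ] {a b c d : α} (hbc : b ≤ c) : AEDisjoint μ (Icc a b) (Icc c d) := by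
  have inter_subset : Icc a b ∩ Icc c d ⊆ {b} := fun _ hx ↦
    le_antisymm hx.1.2 (hbc.trans hx.2.1)
  exact measure_mono_null inter_subset (measure_singleton b)

lemma measureReal_symmDiff_eq_add_sub_inter {α : Type*} [MeasurableSpace α] {μ : Measure α}
    {s t : Set α} (hs : MeasurableSet s) (ht : MeasurableSet t) (hμs : μ s ≠ ⊤) (hμt : μ t ≠ ⊤) :
    μ.real (symmDiff s t) = μ.real s + μ.real t - 2 * μ.real (s ∩ t) := by
  have s_split := measureReal_inter_add_sdiff (μ := μ) ht hμs
  have t_split := measureReal_inter_add_sdiff (μ := μ) hs hμt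
  rw [inter_comm] at t_split
  rw [measureReal_symmDiff_eq hs ht hμs hμt]
  linarith

/-- The set `[-τ, x - τ] ∪ [1 - τ, x + 1 - τ]` occurring in `phi`. For `τ` and `x` in `[0, 1]`, its
trace on `[0, 1]` represents the translate of `[0, x]` by `-τ` modulo `1`. -/
def wrappedIcc (τ x : ℝ) : Set ℝ := Icc (-τ) (x - τ) ∪ Icc (1 - τ) (x + 1 - τ)

lemma measurableSet_wrappedIcc (τ x : ℝ) : MeasurableSet (wrappedIcc τ x) :=
  measurableSet_Icc.union measurableSet_Icc

lemma volume_real_wrappedIcc_inter_Icc {τ x : ℝ} (hτ : τ ∈ Icc (0 : ℝ) 1) (hx : x ≤ 1) (y : ℝ) :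
    volume.real (wrappedIcc τ x ∩ Icc 0 y) =
      max (min (x - τ) y) 0 + max (min x (y - (1 - τ))) 0 := by
  have left_inter : Icc (-τ) (x - τ) ∩ Icc 0 y = Icc 0 (min (x - τ) y) := by
    rw [Icc_inter_Icc, sup_of_le_right (neg_nonpos.2 hτ.1)]
  have right_inter : Icc (1 - τ) (x + 1 - τ) ∩ Icc 0 y = Icc (1 - τ) (min (x + 1 - τ) y) := by
    rw [Icc_inter_Icc, sup_of_le_left (sub_nonneg.2 hτ.2)]
  have ends_le : min (x - τ) y ≤ 1 - τ := (min_le_left _ _).trans (sub_le_sub_right hx τ)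
  rw [wrappedIcc, union_inter_distrib_right, left_inter, right_inter,
    measureReal_union₀ measurableSet_Icc.nullMeasurableSet (Icc_aedisjoint_Icc ends_le)
      measure_Icc_lt_top.ne measure_Icc_lt_top.ne,
    Real.volume_real_Icc, Real.volume_real_Icc, sub_zero, ← min_sub_sub_right]
  congr 3
  ring

lemma volume_real_wrappedIcc_inter_Icc_zero_one {τ x : ℝ} (hτ : τ ∈ Icc (0 : ℝ) 1)
    (hx : x ∈ Icc (0 : ℝ) 1) : volume.real (wrappedIcc τ x ∩ Icc 0 1) = x := by
  have sub_le_one : x - τ ≤ 1 := (sub_le_self x hτ.1).trans hx.2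
  rw [volume_real_wrappedIcc_inter_Icc hτ hx.2, min_eq_left sub_le_one, sub_sub_cancel,
    max_eq_left (le_min hx.1 hτ.1), ← sub_self τ, max_sub_sub_right, sub_add_eq_add_sub,
    max_add_min, add_sub_cancel_right]

lemma phi_eq_add_sub_overlap {τ x y : ℝ} (hτ : τ ∈ Icc (0 : ℝ) 1) (hx : x ∈ Icc (0 : ℝ) 1)
    (hy : y ∈ Icc (0 : ℝ) 1) :
    phi τ x y = x + y - 2 * (max (min (x - τ) y) 0 + max (min x (y - (1 - τ))) 0) := by
  have Icc_subset : Icc 0 y ⊆ Icc 0 1 := Icc_subset_Icc_right hy.2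
  calc phi τ x y = volume.real (Icc 0 1 ∩ symmDiff (wrappedIcc τ x) (Icc 0 y)) := rfl
    _ = volume.real (symmDiff (wrappedIcc τ x ∩ Icc 0 1) (Icc 0 y)) := by
        rw [inter_symmDiff_distrib_left, inter_comm _ (wrappedIcc τ x), inter_eq_right.2 Icc_subset]
    _ = volume.real (wrappedIcc τ x ∩ Icc 0 1) + volume.real (Icc 0 y)
          - 2 * volume.real (wrappedIcc τ x ∩ Icc 0 y) := by
        rw [measureReal_symmDiff_eq_add_sub_inter
          ((measurableSet_wrappedIcc τ x).inter measurableSet_Icc) measurableSet_Icc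
          (measure_ne_top_of_subset inter_subset_right measure_Icc_lt_top.ne)
          measure_Icc_lt_top.ne, inter_assoc, inter_eq_right.2 Icc_subset]
    _ = _ := by
        rw [volume_real_wrappedIcc_inter_Icc_zero_one hτ hx, Real.volume_real_Icc_of_le hy.1,
          sub_zero, volume_real_wrappedIcc_inter_Icc hτ hx.2]

/-- Diagonal values of the boundary term: `φ_τ(s,s) = 2·min{s, 1−s, τ, 1−τ}`. -/
theorem phi_diag (τ s : ℝ) (hτ : τ ∈ Set.Icc (0 : ℝ) 1) (hs : s ∈ Set.Icc (0 : ℝ) 1) :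
    phi τ s s = 2 * min (min s (1 - s)) (min τ (1 - τ)) := by
  have overlap : max (s - τ) 0 + max (s - (1 - τ)) 0 =
      s - min (min s (1 - s)) (min τ (1 - τ)) := calc
    _ = max (max (s - τ) (s - (1 - τ))) (max (s - (1 - s)) (s - s)) := by
      rw [max_zero_add_max_zero, sub_self]
      congr 2
      ring
    _ = s - min (min s (1 - s)) (min τ (1 - τ)) := by
      rw [max_sub_sub_left, max_sub_sub_left, max_sub_sub_left, min_comm, min_comm s]
  rw [phi_eq_add_sub_overlap hτ hs hs, min_eq_left (sub_le_self s hτ.1),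
    min_eq_right (sub_le_self s (sub_nonneg.2 hτ.2)), overlap]
  ring
end
end

section
/- Cluster points of the periodicity defect for irrational L: if L > 0 is irrational, then every t ∈ [0,1] is a cluster point of the sequence τ_n = (⌊Ln²⌋ − n·⌊Ln⌋)/n; that is, the set of cluster points of (τ_n) is the whole interval [0,1]. -/
open Filter Set

noncomputable section

/-- The periodicity-defect sequence `τ_n = (⌊Ln²⌋ − n·⌊Ln⌋)/n`. -/
def tauSeq (L : ℝ) (n : ℕ) : ℝ :=
  ((Nat.floor (L * (n : ℝ) ^ 2) : ℝ) - (n : ℝ) * (Nat.floor (L * (n : ℝ)) : ℝ)) / n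

/-!
Writing `⌊x⌋ = x - {x}` gives `τ_n = {Ln} - {Ln²}/n`, so `τ_n` has the same cluster points as
`{Ln}`. For irrational `L`, the multiples of `L` cluster everywhere on `ℝ/ℤ`; the fractional part is
continuous on `ℝ/ℤ` away from `0`, so every point of `(0, 1)` is a cluster point of `{Ln}`, and the
set of cluster points is closed.
-/

open Topology Uniformity

section ClusterPoints

variable {X : Type*}

lemma mapClusterPt_congr_uniformity {ι : Type*} [UniformSpace X] {F : Filter ι} {u v : ι → X}
    {x : X} (huv : Tendsto (fun i ↦ (u i, v i)) F (𝓤 X)) :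
    MapClusterPt x F u ↔ MapClusterPt x F v := by
  simp only [mapClusterPt_iff_ultrafilter]
  exact exists_congr fun _ ↦ and_congr_right fun hU ↦ Uniform.tendsto_congr (huv.mono_left hU)

lemma mapClusterPt_atTop_iff_exists_strictMono_ge [TopologicalSpace X] [FirstCountableTopology X]
    {u : ℕ → X} {x : X} (N : ℕ) :
    MapClusterPt x atTop u ↔
      ∃ φ : ℕ → ℕ, StrictMono φ ∧ (∀ m, N ≤ φ m) ∧ Tendsto (fun m ↦ u (φ m)) atTop (𝓝 x) := by
  constructor
  · intro hx
    obtain ⟨ψ, hψ, hlim⟩ := hx.tendsto_subseq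
    exact ⟨fun m ↦ ψ (m + N), fun _ _ h ↦ hψ (Nat.add_lt_add_right h N),
      fun m ↦ (Nat.le_add_left N m).trans (hψ.le_apply), hlim.comp (tendsto_add_atTop_nat N)⟩
  · rintro ⟨φ, hφ, -, hlim⟩
    exact .of_comp hφ.tendsto_atTop hlim.mapClusterPt

end ClusterPoints

section FractionalParts

lemma mapClusterPt_fract_of_coe_addCircle {𝕜 ι : Type*} [Field 𝕜] [LinearOrder 𝕜]
    [IsStrictOrderedRing 𝕜] [FloorRing 𝕜] [TopologicalSpace 𝕜] [OrderTopology 𝕜] {F : Filter ι}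
    {u : ι → 𝕜} {t : 𝕜} (ht : t ∈ Ioo 0 1)
    (hu : MapClusterPt (t : AddCircle (1 : 𝕜)) F fun i ↦ (u i : AddCircle (1 : 𝕜))) :
    MapClusterPt t F fun i ↦ Int.fract (u i) := by
  have : Fact ((0 : 𝕜) < 1) := ⟨one_pos⟩
  have fract_t : Int.fract t = t := Int.fract_eq_self.2 (Ioo_subset_Ico_self ht)
  have t_ne_zero : (t : AddCircle (1 : 𝕜)) ≠ (0 : 𝕜) := by
    rw [Ne, AddCircle.coe_eq_coe_iff_of_mem_Ico (a := 0) (by simpa using Ioo_subset_Ico_self ht)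
      (by simp)]
    exact ht.1.ne'
  have fract_cluster := hu.continuousAt_comp
    (continuousAt_subtype_val.comp (AddCircle.continuousAt_equivIco 1 0 t_ne_zero))
  simpa [Function.comp_def, fract_t] using fract_cluster

lemma mapClusterPt_atTop_nsmul_coe_addCircle {a p : ℝ} [Fact (0 < p)] (h : Irrational (a / p))
    (x : AddCircle p) : MapClusterPt x atTop fun n : ℕ ↦ n • (a : AddCircle p) :=
  ((mapClusterPt_atTop_nsmul_tfae x (a : AddCircle p)).out 0 3).2
    (AddCircle.denseRange_zsmul_coe_iff.2 h x)

lemma mapClusterPt_fract_mul_natCast_iff {L t : ℝ} (hL : Irrational L) :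
    MapClusterPt t atTop (fun n : ℕ ↦ Int.fract (L * n)) ↔ t ∈ Icc 0 1 := by
  constructor
  · exact fun ht ↦ isClosed_Icc.mem_of_mapClusterPt ht <|
      .of_forall fun _ ↦ ⟨Int.fract_nonneg _, (Int.fract_lt_one _).le⟩
  · have cluster_Ioo : Ioo 0 1 ⊆ {s | MapClusterPt s atTop fun n : ℕ ↦ Int.fract (L * n)} := by
      intro s hs
      refine mapClusterPt_fract_of_coe_addCircle hs ?_
      have : Fact ((0 : ℝ) < 1) := ⟨one_pos⟩
      simpa [mul_comm L, ← nsmul_eq_mul, AddCircle.coe_nsmul] using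
        mapClusterPt_atTop_nsmul_coe_addCircle (p := 1) (by simpa using hL) (s : AddCircle (1 : ℝ))
    rw [← closure_Ioo zero_ne_one]
    exact fun ht ↦ closure_minimal cluster_Ioo isClosed_setOfPred_clusterPt ht

end FractionalParts

section PeriodicityDefect

variable {L : ℝ}

lemma tauSeq_eq_fract_sub_fract_div (hL : 0 ≤ L) (n : ℕ) :
    tauSeq L n = Int.fract (L * n) - Int.fract (L * n ^ 2) / n := by
  rcases eq_or_ne n 0 with rfl | hn
  · simp [tauSeq]
  rw [tauSeq, natCast_floor_eq_intCast_floor (by positivity),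
    natCast_floor_eq_intCast_floor (by positivity), ← Int.self_sub_fract, ← Int.self_sub_fract]
  field_simp
  ring

lemma tendsto_tauSeq_fract_uniformity (hL : 0 ≤ L) :
    Tendsto (fun n : ℕ ↦ (tauSeq L n, Int.fract (L * n))) atTop (𝓤 ℝ) := by
  have defect_tendsto : Tendsto (fun n : ℕ ↦ Int.fract (L * n ^ 2) / n) atTop (𝓝 0) :=
    tendsto_bdd_div_atTop_nhds_zero (b := 0) (B := 1) (.of_forall fun _ ↦ Int.fract_nonneg _)
      (.of_forall fun _ ↦ (Int.fract_lt_one _).le) tendsto_natCast_atTop_atTop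
  rw [uniformity_eq_comap_nhds_zero, tendsto_comap_iff]
  simpa [Function.comp_def, tauSeq_eq_fract_sub_fract_div hL] using defect_tendsto

end PeriodicityDefect

/-- Cluster points of the periodicity defect for irrational `L > 0`: the whole of `[0,1]`. -/
theorem tauSeq_clusterPts_irrational (L : ℝ) (hL : 0 < L) (hirr : Irrational L) :
    {t : ℝ | ∃ φ : ℕ → ℕ, StrictMono φ ∧ (∀ m, 1 ≤ φ m) ∧
        Tendsto (fun m => tauSeq L (φ m)) atTop (nhds t)} = Set.Icc 0 1 := by
  ext t
  rw [mem_ofPred_eq, ← mapClusterPt_atTop_iff_exists_strictMono_ge,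
    mapClusterPt_congr_uniformity (tendsto_tauSeq_fract_uniformity hL.le),
    mapClusterPt_fract_mul_natCast_iff hirr]
end
end

section
/- Upper bound (recovery sequence) for the periodic spin energy: Let L > 0, σ ∈ (0,1), τ ∈ [0,1], and let (n_m) be a strictly increasing sequence of integers with τ_{n_m} = (⌊L n_m²⌋ − n_m⌊L n_m⌋)/n_m → τ. Let (k_m) be integers with 0 ≤ k_m ≤ ⌊L n_m²⌋ and k_m/(L n_m²) → σ. Let v : ℝ → ℝ satisfy 0 ≤ v(x) ≤ 1 for all x ∈ (0,L), have finite pointwise total variation on (0,L), and ∫_{(0,L)} v dλ = σL, and let a = lim_{x→0⁺} v(x) and b = lim_{x→L⁻} v(x) (these one-sided limits exist). Then there exist u_m ∈ A_{n_m}(L,k_m) whose associated step functions converge weakly-* in L^∞(0,L) to v and such that limsup_{m→∞} F^{#}_{n_m}(u_m) ≤ 2·λ({x ∈ (0,L) : 0 < v(x) < 1}) + Var(v;(0,L)) + φ_τ(a,b). -/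
/-!
The chain is cut into `⌊Ln⌋` rows of length `n`, followed by a shorter overhanging row, and each row
is filled with particles from the right; the row at macroscopic position `x` carries about `n * v x`
of them. Every partially filled row then costs at most one bond inside it and one where it meets the
next row, while bonds between vertical neighbours cost the total variation of the fillings. Sampling
`v` in each row at a point where it is `0` or `1`, whenever there is one, leaves at most
`n * λ{0 < v < 1}` partial rows and does not increase the variation. Rounding `n * v` towards the
preceding rounded value creates no new oscillation, and the number of particles is corrected by
raising (or, exchanging particles and holes, lowering) interior rows to a common level, starting
next to the tallest one, at cost `o(n)`. Finally, the bonds of length `⌊Ln²⌋ - n` compare the first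
row with the last `n` sites, which are shifted by the overhang: their energy is a Riemann sum for
`φ_τ(a, b)`.
-/

open MeasureTheory Filter Set
open scoped ENNReal Classical

noncomputable section

/-- `AdmDisc L n k u` : `u` belongs to `A_n(L,k)`, i.e. `u` takes the values `0,1` on
`{1,…,⌊Ln²⌋}`, exactly `k` of those indices carry the value `1`, and `u` vanishes
outside `{1,…,⌊Ln²⌋}` (extension by `0`). -/
def AdmDisc (L : ℝ) (n k : ℕ) (u : ℕ → ℝ) : Prop :=
  (∀ i ∈ Finset.Icc 1 (Nat.floor (L * (n : ℝ) ^ 2)), u i = 0 ∨ u i = 1) ∧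
  (∀ i, i ∉ Finset.Icc 1 (Nat.floor (L * (n : ℝ) ^ 2)) → u i = 0) ∧
  ((Finset.Icc 1 (Nat.floor (L * (n : ℝ) ^ 2))).filter fun i => u i = 1).card = k

/-- The periodic discrete energy `F_n^#(u) = (1/n)·Σ (u_i − u_j)²`, the sum running over the
(unordered) pairs `{i,j} ⊆ {1,…,⌊Ln²⌋}` with `|i−j| ∈ {1, n, ⌊Ln²⌋−1, ⌊Ln²⌋−n}`. -/
def energyPer (L : ℝ) (n : ℕ) (u : ℕ → ℝ) : ℝ :=
  (1 / (n : ℝ)) *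
    ∑ p ∈ (Finset.Icc 1 (Nat.floor (L * (n : ℝ) ^ 2)) ×ˢ
        Finset.Icc 1 (Nat.floor (L * (n : ℝ) ^ 2))).filter
        (fun p => p.1 < p.2 ∧ (p.2 - p.1 = 1 ∨ p.2 - p.1 = n ∨
          p.2 - p.1 = Nat.floor (L * (n : ℝ) ^ 2) - 1 ∨
          p.2 - p.1 = Nat.floor (L * (n : ℝ) ^ 2) - n)),
      (u p.1 - u p.2) ^ 2

/-- The step function associated with a discrete spin function: `x ↦ u_i` for
`x ∈ ((i−1)/n², i/n²]`. -/
def stepFun (n : ℕ) (u : ℕ → ℝ) : ℝ → ℝ := fun x => u (⌈(n : ℝ) ^ 2 * x⌉.toNat)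

/-- Weak-* convergence in `L^∞(I)`: `∫_I v_n g → ∫_I w g` for every integrable `g` on `I`. -/
def WeakStarTo (I : Set ℝ) (v : ℕ → ℝ → ℝ) (w : ℝ → ℝ) : Prop :=
  ∀ g : ℝ → ℝ, IntegrableOn g I volume →
    Tendsto (fun n => ∫ x in I, v n x * g x) atTop (nhds (∫ x in I, w x * g x))

/-! ### Rows filled from the right -/

/-- Total variation of the first `R + 1` terms of a sequence. -/
def rowVar {α : Type*} [AddCommGroup α] [Lattice α] (w : ℕ → α) (R : ℕ) : α :=
  ∑ r ∈ Finset.range R, |w (r + 1) - w r|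

/-- The rows `r < R` whose filling `w r` is neither empty (`0`) nor full (`top`). -/
def partialRows {α : Type*} [Zero α] [LT α] [DecidableLT α] (top : α) (w : ℕ → α)
    (R : ℕ) : Finset ℕ :=
  {r ∈ Finset.range R | 0 < w r ∧ w r < top}

/-- Indicator of the occupied columns `c` of a row of length `n` whose last `w` sites are
occupied. -/
def rightFill (n : ℕ) (w : ℤ) (c : ℕ) : ℝ := if (n : ℤ) ≤ c + w then 1 else 0

/-- The configuration on `ℕ`, cut into rows of length `n`, whose row `r` is filled from the right
with `w r` particles. -/
def rowSite (n : ℕ) (w : ℕ → ℤ) (j : ℕ) : ℝ := rightFill n (w (j / n)) (j % n)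

/-- `rowSite` restricted to the first `N` sites and re-indexed by `{1, …, N}`, as a spin
function. -/
def rowSpin (n N : ℕ) (w : ℕ → ℤ) (i : ℕ) : ℝ :=
  if i ∈ Finset.Icc 1 N then rowSite n w (i - 1) else 0

/-- Interaction energy of the bonds `{i, i + d}` of the chain `{1, …, N}`. -/
def bondSum (N : ℕ) (u : ℕ → ℝ) (d : ℕ) : ℝ :=
  ∑ j ∈ Finset.range (N - d), (u (j + 1) - u (j + 1 + d)) ^ 2

/-- Energy of the `d`-th bond, counted from the right, that joins the first row to the last `n`
sites, when the first row, the last full row and the overhanging row (of length `t`) are filled with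
`p`, `q` and `q'` particles. The integer case describes the chain and the real case its limit, where
all lengths are divided by `n`. -/
def seamTerm {α : Type*} [AddGroup α] [LinearOrder α] (n t p q q' d : α) : ℝ :=
  if d + t < n then ((if d + t < p then 1 else 0) - (if d < q then 1 else 0)) ^ 2
  else ((if d + t - n < p then 1 else 0) - (if d < q' then 1 else 0)) ^ 2

theorem sum_range_mul_add {M : Type*} [AddCommMonoid M] (f : ℕ → M) (n R t : ℕ) :
    ∑ i ∈ Finset.range (n * R + t), f i =
      ∑ r ∈ Finset.range R, ∑ c ∈ Finset.range n, f (n * r + c) +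
        ∑ c ∈ Finset.range t, f (n * R + c) := by
  rw [Finset.sum_range_add]
  congr 1
  induction R with
  | zero => simp
  | succ R ih => rw [Nat.mul_succ, Finset.sum_range_add, ih, Finset.sum_range_succ]

theorem sum_filter_or_le {ι : Type*} (s : Finset ι) (p q : ι → Prop) [DecidablePred p]
    [DecidablePred q] [DecidablePred fun i ↦ p i ∨ q i] {f : ι → ℝ} (hf : ∀ i, 0 ≤ f i) :
    ∑ i ∈ s with p i ∨ q i, f i ≤ ∑ i ∈ s with p i, f i + ∑ i ∈ s with q i, f i := by
  simp only [Finset.sum_filter, ← Finset.sum_add_distrib]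
  refine Finset.sum_le_sum fun i _ ↦ ?_
  by_cases hp : p i <;> by_cases hq : q i <;> simp [hp, hq, hf i]

theorem sum_pairs_at_distance {M : Type*} [AddCommMonoid M] (N : ℕ) {d : ℕ} (hd : 0 < d)
    (f : ℕ × ℕ → M) :
    ∑ p ∈ Finset.Icc 1 N ×ˢ Finset.Icc 1 N with p.1 < p.2 ∧ p.2 - p.1 = d, f p =
      ∑ j ∈ Finset.range (N - d), f (j + 1, j + 1 + d) := by
  refine (Finset.sum_nbij' (fun j ↦ (j + 1, j + 1 + d)) (fun p ↦ p.1 - 1) ?_ ?_ ?_ ?_ ?_).symm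
  · simp only [Finset.mem_range, Finset.mem_filter, Finset.mem_product, Finset.mem_Icc]
    omega
  · simp only [Finset.mem_range, Finset.mem_filter, Finset.mem_product, Finset.mem_Icc]
    omega
  · simp
  · rintro ⟨i, j⟩
    simp only [Finset.mem_filter, Finset.mem_product, Finset.mem_Icc, Prod.mk.injEq]
    omega
  · simp

theorem energyPer_le_bondSum {L : ℝ} {n N : ℕ} (u : ℕ → ℝ) (hN : ⌊L * (n : ℝ) ^ 2⌋₊ = N)
    (hn : 0 < n) (hnN : n < N) :
    energyPer L n u ≤ 1 / n *
      (bondSum N u 1 + (bondSum N u n + (bondSum N u (N - 1) + bondSum N u (N - n)))) := by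
  have bondSum_eq (d : ℕ) (hd : 0 < d) :
      ∑ p ∈ Finset.Icc 1 N ×ˢ Finset.Icc 1 N with p.1 < p.2 ∧ p.2 - p.1 = d, (u p.1 - u p.2) ^ 2 =
        bondSum N u d := sum_pairs_at_distance N hd fun p ↦ (u p.1 - u p.2) ^ 2
  rw [energyPer, hN, ← bondSum_eq 1 one_pos, ← bondSum_eq n hn, ← bondSum_eq (N - 1) (by omega),
    ← bondSum_eq (N - n) (by omega)]
  simp only [and_or_left]
  have h0 (p : ℕ × ℕ) : 0 ≤ (u p.1 - u p.2) ^ 2 := sq_nonneg _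
  gcongr
  refine (sum_filter_or_le _ _ _ h0).trans (add_le_add_right ?_ _)
  refine (sum_filter_or_le _ _ _ h0).trans (add_le_add_right ?_ _)
  exact sum_filter_or_le _ _ _ h0

theorem rightFill_eq_zero_or_one (n : ℕ) (w : ℤ) (c : ℕ) :
    rightFill n w c = 0 ∨ rightFill n w c = 1 := by
  unfold rightFill; split_ifs <;> simp

theorem sum_rightFill {n : ℕ} {w : ℤ} (hw : w ≤ n) (t : ℕ) :
    ∑ c ∈ Finset.range t, rightFill n w c = ((max 0 (w + t - n) : ℤ) : ℝ) := by
  induction t with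
  | zero => simp [hw]
  | succ t ih =>
    rw [Finset.sum_range_succ, ih, rightFill]
    split_ifs with h <;> norm_cast <;> omega

theorem sum_sq_rightFill_sub {n : ℕ} {w w' : ℤ} (hw : w ∈ Icc (0 : ℤ) n)
    (hw' : w' ∈ Icc (0 : ℤ) n) :
    ∑ c ∈ Finset.range n, (rightFill n w c - rightFill n w' c) ^ 2 = ((|w' - w| : ℤ) : ℝ) := by
  wlog h : w ≤ w' generalizing w w'
  · simp only [abs_sub_comm w' w, ← this hw' hw (by omega), sub_sq_comm]
  have hsq (c : ℕ) :
      (rightFill n w c - rightFill n w' c) ^ 2 = rightFill n w' c - rightFill n w c := by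
    unfold rightFill
    split_ifs <;> first | omega | norm_num
  simp only [hsq, Finset.sum_sub_distrib, sum_rightFill hw.2, sum_rightFill hw'.2]
  norm_cast
  have := hw.1
  rw [abs_of_nonneg] <;> omega

theorem sum_sq_rightFill_succ_le {n m : ℕ} (w : ℤ) (hm : m < n) :
    ∑ c ∈ Finset.range m, (rightFill n w c - rightFill n w (c + 1)) ^ 2 ≤
      if 0 < w ∧ w < n then 1 else 0 := by
  have hsq (c : ℕ) : (rightFill n w c - rightFill n w (c + 1)) ^ 2 =
      rightFill n w (c + 1) - rightFill n w c := by
    unfold rightFill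
    split_ifs <;> first | omega | norm_num
  simp only [hsq, Finset.sum_range_sub]
  unfold rightFill
  split_ifs <;> first | omega | norm_num

theorem rowSite_mul_add {n c : ℕ} (w : ℕ → ℤ) (r : ℕ) (hc : c < n) :
    rowSite n w (n * r + c) = rightFill n (w r) c := by
  rw [rowSite, Nat.mul_add_mod, Nat.mod_eq_of_lt hc, Nat.mul_add_div (by omega),
    Nat.div_eq_of_lt hc, add_zero]

theorem rowSite_eq_zero_or_one (n : ℕ) (w : ℕ → ℤ) (j : ℕ) :
    rowSite n w j = 0 ∨ rowSite n w j = 1 :=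
  rightFill_eq_zero_or_one ..

theorem rowSpin_add_one {n N j : ℕ} (w : ℕ → ℤ) (hj : j < N) :
    rowSpin n N w (j + 1) = rowSite n w j := by
  simp [rowSpin, Nat.succ_le_of_lt hj]

theorem sum_rowSite {n R t : ℕ} {w : ℕ → ℤ} (ht : t ≤ n) (hw : ∀ r, w r ∈ Icc (0 : ℤ) n) :
    ∑ j ∈ Finset.range (n * R + t), rowSite n w j =
      ((∑ r ∈ Finset.range R, w r + max 0 (w R + t - n) : ℤ) : ℝ) := by
  have row_sum (r m : ℕ) (hm : m ≤ n) :
      ∑ c ∈ Finset.range m, rowSite n w (n * r + c) = ((max 0 (w r + m - n) : ℤ) : ℝ) := by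
    rw [← sum_rightFill (hw r).2]
    exact Finset.sum_congr rfl fun c hc ↦
      rowSite_mul_add w r ((Finset.mem_range.1 hc).trans_le hm)
  simp only [sum_range_mul_add, row_sum _ _ le_rfl, row_sum _ _ ht]
  push_cast [add_sub_cancel_right]
  simp [fun r ↦ (hw r).1]

theorem admDisc_rowSpin {L : ℝ} {n R t k : ℕ} {w : ℕ → ℤ}
    (hN : ⌊L * (n : ℝ) ^ 2⌋₊ = n * R + t) (ht : t ≤ n) (hw : ∀ r, w r ∈ Icc (0 : ℤ) n)
    (hk : ∑ r ∈ Finset.range R, w r + max 0 (w R + t - n) = k) :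
    AdmDisc L n k (rowSpin n (n * R + t) w) := by
  rw [AdmDisc, hN]
  refine ⟨fun i hi ↦ ?_, fun i hi ↦ if_neg hi, ?_⟩
  · simpa only [rowSpin, if_pos hi] using rowSite_eq_zero_or_one n w (i - 1)
  have spin_eq (i : ℕ) (hi : i ∈ Finset.Icc 1 (n * R + t)) :
      ((if rowSpin n (n * R + t) w i = 1 then 1 else 0 : ℕ) : ℝ) = rowSpin n (n * R + t) w i := by
    rw [rowSpin, if_pos hi]
    rcases rowSite_eq_zero_or_one n w (i - 1) with h | h <;> simp [h]
  rw [← Nat.cast_inj (R := ℝ), Finset.card_filter, Nat.cast_sum, Finset.sum_congr rfl spin_eq,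
    ← Int.cast_natCast k, ← hk, ← sum_rowSite ht hw]
  refine (Finset.sum_nbij' (· + 1) (· - 1) ?_ ?_ ?_ ?_ ?_).symm
  · simp only [Finset.mem_range, Finset.mem_Icc]; omega
  · simp only [Finset.mem_range, Finset.mem_Icc]; omega
  · simp
  · simp only [Finset.mem_Icc]; omega
  · exact fun j hj ↦ (rowSpin_add_one w (Finset.mem_range.1 hj)).symm

theorem bondSum_rowSpin {n N d : ℕ} (w : ℕ → ℤ) :
    bondSum N (rowSpin n N w) d =
      ∑ j ∈ Finset.range (N - d), (rowSite n w j - rowSite n w (j + d)) ^ 2 := by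
  refine Finset.sum_congr rfl fun j hj ↦ ?_
  rw [Finset.mem_range] at hj
  rw [add_right_comm, rowSpin_add_one w (by omega), rowSpin_add_one w (by omega)]

theorem sum_sq_rowSite_succ_row_le {n : ℕ} {w : ℕ → ℤ} (hw : ∀ r, w r ∈ Icc (0 : ℤ) n)
    (hn : 0 < n) (r : ℕ) :
    ∑ c ∈ Finset.range n, (rowSite n w (n * r + c) - rowSite n w (n * r + c + 1)) ^ 2 ≤
      2 * (if 0 < w r ∧ w r < n then 1 else 0) +
        ((if w r = n then 1 else 0) - (if w (r + 1) = n then 1 else 0)) +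
        2 / n * ((|w (r + 1) - w r| : ℤ) : ℝ) := by
  obtain ⟨m, rfl⟩ : ∃ m, n = m + 1 := ⟨n - 1, by omega⟩
  have inner_bonds : ∑ c ∈ Finset.range m,
      (rowSite (m + 1) w ((m + 1) * r + c) - rowSite (m + 1) w ((m + 1) * r + c + 1)) ^ 2 ≤
        if 0 < w r ∧ w r < (m + 1 : ℕ) then 1 else 0 := by
    refine (Finset.sum_congr rfl fun c hc ↦ ?_).trans_le
      (sum_sq_rightFill_succ_le (w r) m.lt_succ_self)
    rw [Finset.mem_range] at hc
    rw [rowSite_mul_add w r (by omega), add_assoc, rowSite_mul_add w r (by omega)]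
  -- The last site of a row is empty only if the row is, and the first one occupied only if the row
  -- is full: this bond is paid for by a drop from full, by partiality, or by a jump of size `n`.
  have wrap_bond :
      (rowSite (m + 1) w ((m + 1) * r + m) - rowSite (m + 1) w ((m + 1) * (r + 1))) ^ 2 ≤
        (if 0 < w r ∧ w r < (m + 1 : ℕ) then 1 else 0) +
          ((if w r = (m + 1 : ℕ) then 1 else 0) - (if w (r + 1) = (m + 1 : ℕ) then 1 else 0)) +
          2 / (m + 1 : ℕ) * ((|w (r + 1) - w r| : ℤ) : ℝ) := by
    rw [rowSite_mul_add w r (by omega), ← add_zero ((m + 1) * (r + 1)),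
      rowSite_mul_add w (r + 1) (by omega), rightFill, rightFill]
    have hr := hw r
    have hr' := hw (r + 1)
    rw [mem_Icc] at hr hr'
    by_cases hjump : w r = 0 ∧ w (r + 1) = (m + 1 : ℕ)
    · have h2 : 2 / ((m + 1 : ℕ) : ℝ) * ((|w (r + 1) - w r| : ℤ) : ℝ) = 2 := by
        rw [hjump.1, hjump.2, sub_zero, Nat.abs_cast, Int.cast_natCast]
        field_simp
      rw [h2]
      split_ifs <;> first | omega | norm_num
    · have h0 : 0 ≤ 2 / ((m + 1 : ℕ) : ℝ) * ((|w (r + 1) - w r| : ℤ) : ℝ) := by positivity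
      split_ifs <;> first | omega | linarith
  rw [Finset.sum_range_succ, add_assoc _ m 1, ← Nat.mul_add_one]
  linarith

theorem bondSum_one_rowSpin_le {n R t : ℕ} {w : ℕ → ℤ} (ht : t < n)
    (hw : ∀ r, w r ∈ Icc (0 : ℤ) n) :
    bondSum (n * R + t) (rowSpin n (n * R + t) w) 1 ≤
      2 * (partialRows (n : ℤ) w R).card + 2 / n * (rowVar w R : ℤ) + 2 := by
  have hn : 0 < n := by omega
  have last_row : ∑ c ∈ Finset.range (n - 1),
      (rowSite n w (n * R + c) - rowSite n w (n * R + c + 1)) ^ 2 ≤ 1 := by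
    refine (Finset.sum_congr rfl fun c hc ↦ ?_).trans_le
      ((sum_sq_rightFill_succ_le (w R) (by omega : n - 1 < n)).trans (by split_ifs <;> norm_num))
    rw [Finset.mem_range] at hc
    rw [rowSite_mul_add w R (by omega), add_assoc, rowSite_mul_add w R (by omega)]
  have full_rows := Finset.sum_le_sum fun r (_ : r ∈ Finset.range R) ↦
    sum_sq_rowSite_succ_row_le hw hn r
  rw [Finset.sum_add_distrib, Finset.sum_add_distrib, ← Finset.mul_sum, ← Finset.mul_sum,
    Finset.sum_range_sub' (fun r ↦ if w r = n then (1 : ℝ) else 0), Finset.sum_boole,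
    ← Int.cast_sum] at full_rows
  have telescoped : (if w 0 = n then (1 : ℝ) else 0) - (if w R = n then (1 : ℝ) else 0) ≤ 1 := by
    split_ifs <;> norm_num
  calc bondSum (n * R + t) (rowSpin n (n * R + t) w) 1
      ≤ ∑ j ∈ Finset.range (n * R + (n - 1)), (rowSite n w j - rowSite n w (j + 1)) ^ 2 := by
        rw [bondSum_rowSpin]
        exact Finset.sum_le_sum_of_subset_of_nonneg (Finset.range_mono (by omega))
          fun _ _ _ ↦ sq_nonneg _
    _ ≤ _ := by
        rw [sum_range_mul_add]
        unfold partialRows rowVar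
        linarith

theorem bondSum_row_rowSpin_le {n R t : ℕ} {w : ℕ → ℤ} (ht : t ≤ n)
    (hw : ∀ r, w r ∈ Icc (0 : ℤ) n) :
    bondSum (n * R + t) (rowSpin n (n * R + t) w) n ≤ (rowVar w R : ℤ) := by
  calc bondSum (n * R + t) (rowSpin n (n * R + t) w) n
      ≤ ∑ j ∈ Finset.range (n * R + 0), (rowSite n w j - rowSite n w (j + n)) ^ 2 := by
        rw [bondSum_rowSpin]
        exact Finset.sum_le_sum_of_subset_of_nonneg (Finset.range_mono (by omega))
          fun _ _ _ ↦ sq_nonneg _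
    _ = _ := by
        rw [sum_range_mul_add, Finset.sum_range_zero, add_zero, rowVar, Int.cast_sum]
        refine Finset.sum_congr rfl fun r _ ↦ ?_
        rw [← sum_sq_rightFill_sub (hw r) (hw (r + 1))]
        refine Finset.sum_congr rfl fun c hc ↦ ?_
        rw [Finset.mem_range] at hc
        rw [rowSite_mul_add w r hc, add_right_comm, ← Nat.mul_succ, rowSite_mul_add w (r + 1) hc]

theorem bondSum_corner_rowSpin_le_one {n N : ℕ} (w : ℕ → ℤ) (hN : 0 < N) :
    bondSum N (rowSpin n N w) (N - 1) ≤ 1 := by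
  rw [bondSum_rowSpin, Nat.sub_sub_self hN, Finset.sum_range_one, zero_add]
  rcases rowSite_eq_zero_or_one n w 0 with h | h <;>
    rcases rowSite_eq_zero_or_one n w (N - 1) with h' | h' <;> norm_num [h, h']

theorem bondSum_seam_rowSpin {n R t : ℕ} (w : ℕ → ℤ) (ht : t < n) :
    bondSum (n * (R + 1) + t) (rowSpin n (n * (R + 1) + t) w) (n * (R + 1) + t - n) =
      ∑ d ∈ Finset.range n, seamTerm (n : ℤ) t (w 0) (w R) (w (R + 1)) d := by
  have first_row {c : ℕ} (hc : c < n) : rowSite n w c = rightFill n (w 0) c := by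
    simpa using rowSite_mul_add w 0 hc
  have hshift : n * (R + 1) + t - n = n * R + t := by rw [Nat.mul_succ]; omega
  rw [bondSum_rowSpin, Nat.sub_sub_self (by rw [Nat.mul_succ]; omega), hshift,
    ← Nat.sub_add_cancel ht.le, Finset.sum_range_add, Finset.sum_range_add]
  simp only [Nat.sub_add_cancel ht.le]
  congr 1 <;> rw [← Finset.sum_range_reflect] <;> refine Finset.sum_congr rfl fun d hd ↦ ?_ <;>
    rw [Finset.mem_range] at hd
  · rw [first_row (by omega), add_comm, add_assoc, rowSite_mul_add w R (by omega), seamTerm,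
      if_pos (by omega), rightFill, rightFill]
    congr 2 <;> exact if_congr (by omega) rfl rfl
  · have hsite : n - t + (t - 1 - d) + (n * R + t) = n * (R + 1) + (t - 1 - d) := by
      rw [Nat.mul_succ]; omega
    rw [first_row (by omega), hsite, rowSite_mul_add w (R + 1) (by omega), seamTerm,
      if_neg (by omega), rightFill, rightFill]
    congr 2 <;> exact if_congr (by omega) rfl rfl

theorem energyPer_rowSpin_le {L : ℝ} {n R t : ℕ} {w : ℕ → ℤ}
    (hN : ⌊L * (n : ℝ) ^ 2⌋₊ = n * R + t) (hR : 2 ≤ R) (ht : t < n)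
    (hw : ∀ r, w r ∈ Icc (0 : ℤ) n) :
    energyPer L n (rowSpin n (n * R + t) w) ≤ 1 / n *
      (2 * (partialRows (n : ℤ) w R).card + (1 + 2 / n) * (rowVar w R : ℤ) + 3 +
        ∑ d ∈ Finset.range n, seamTerm (n : ℤ) t (w 0) (w (R - 1)) (w R) d) := by
  have hnN : n < n * R + t := by nlinarith
  refine (energyPer_le_bondSum _ hN (by omega) hnN).trans
    (mul_le_mul_of_nonneg_left ?_ (by positivity))
  obtain ⟨R, rfl⟩ : ∃ R', R = R' + 1 := ⟨R - 1, by omega⟩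
  rw [bondSum_seam_rowSpin w ht, Nat.add_sub_cancel]
  linarith [bondSum_one_rowSpin_le (R := R + 1) ht hw, bondSum_row_rowSpin_le (R := R + 1) ht.le hw,
    bondSum_corner_rowSpin_le_one (n := n) w (N := n * (R + 1) + t) (by omega)]

/-! ### Rounding and correcting the number of particles -/

/-- `w'` arises from `w` by raising some of the rows in `I` to the level `M`, at most one of them
stopping short of it. -/
structure IsRaise (I : Finset ℕ) (M : ℤ) (w w' : ℕ → ℤ) : Prop where
  le : ∀ r, w r ≤ w' r
  eq_off : ∀ r ∉ I, w' r = w r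
  le_max : ∀ r, w' r ≤ max (w r) M
  eq_or_eq : ∃ r₀, ∀ r ≠ r₀, w' r = w r ∨ w' r = M

theorem rowVar_update (w : ℕ → ℤ) (x : ℤ) {i R : ℕ} (hi : i + 2 ≤ R) :
    rowVar (Function.update w (i + 1) x) R + (|w (i + 1) - w i| + |w (i + 2) - w (i + 1)|) =
      rowVar w R + (|x - w i| + |w (i + 2) - x|) := by
  obtain ⟨j, rfl⟩ := Nat.exists_eq_add_of_le hi
  have head : ∑ r ∈ Finset.range i,
      |Function.update w (i + 1) x (r + 1) - Function.update w (i + 1) x r| =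
        ∑ r ∈ Finset.range i, |w (r + 1) - w r| :=
    Finset.sum_congr rfl fun r hr ↦ by
      rw [Finset.mem_range] at hr
      rw [Function.update_of_ne (by omega), Function.update_of_ne (by omega)]
  have tail : ∑ r ∈ Finset.range j, |Function.update w (i + 1) x (i + 2 + r + 1) -
      Function.update w (i + 1) x (i + 2 + r)| =
        ∑ r ∈ Finset.range j, |w (i + 2 + r + 1) - w (i + 2 + r)| :=
    Finset.sum_congr rfl fun r _ ↦ by
      rw [Function.update_of_ne (by omega), Function.update_of_ne (by omega)]
  simp only [rowVar, Finset.sum_range_add _ (i + 2) j, Finset.sum_range_succ _ (i + 1),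
    Finset.sum_range_succ _ i, head, tail, Function.update_self,
    Function.update_of_ne (show i ≠ i + 1 by omega),
    Function.update_of_ne (show i + 1 + 1 ≠ i + 1 by omega)]
  ring

theorem rowVar_update_le {w : ℕ → ℤ} {x : ℤ} {i R : ℕ} (hi : i + 2 ≤ R) (hx : w (i + 1) ≤ x)
    (hx' : x ≤ max (w i) (w (i + 2))) : rowVar (Function.update w (i + 1) x) R ≤ rowVar w R := by
  have := rowVar_update w x hi
  grind

theorem rowVar_update_le_add {w : ℕ → ℤ} {x : ℤ} {i R : ℕ} (hi : i + 2 ≤ R)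
    (hx : w (i + 1) ≤ x) :
    rowVar (Function.update w (i + 1) x) R ≤ rowVar w R + 2 * (x - w (i + 1)) := by
  have := rowVar_update w x hi
  grind

theorem exists_lt_of_adjacent_ge {m p i : ℕ} {w : ℕ → ℤ} {M : ℤ} (hp : p ∈ Finset.Icc 1 m)
    (hMp : M ≤ w p) (hi : i ∈ Finset.Icc 1 m) (hiM : w i < M) :
    ∃ r, r + 1 ∈ Finset.Icc 1 m ∧ w (r + 1) < M ∧ M ≤ max (w r) (w (r + 2)) := by
  rw [Finset.mem_Icc] at hp hi
  by_contra! hspread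
  rcases le_total p i with hpi | hip
  · refine hiM.not_ge
      (Nat.le_induction (P := fun j _ ↦ j ≤ m → M ≤ w j) (fun _ ↦ hMp) ?_ i hpi hi.2)
    intro j _ ih hjm
    by_contra! hlt
    exact (hspread j (by simpa using hjm) hlt).not_ge (le_max_of_le_left (ih (by omega)))
  · refine hiM.not_ge (Nat.decreasingInduction' (P := fun j ↦ M ≤ w j) ?_ hip hMp)
    intro j hjp hij ih
    obtain ⟨j, rfl⟩ : ∃ j', j = j' + 1 := ⟨j - 1, by omega⟩
    by_contra! hlt
    exact (hspread j (Finset.mem_Icc.2 (by omega)) hlt).not_ge (le_max_of_le_right ih)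

theorem sum_update_eq_add {I : Finset ℕ} {r : ℕ} (hr : r ∈ I) (w : ℕ → ℤ) (x : ℤ) :
    ∑ i ∈ I, Function.update w r x i = ∑ i ∈ I, w i + (x - w r) := by
  rw [Finset.sum_update_of_mem hr, Finset.sum_eq_add_sum_sdiff_singleton_of_mem hr w]
  ring

theorem IsRaise.of_update {I : Finset ℕ} {M : ℤ} {w w' : ℕ → ℤ} {r : ℕ} (hr : r ∈ I)
    (hrM : w r ≤ M) (h : IsRaise I M (Function.update w r M) w') : IsRaise I M w w' where
  le i := by
    have := h.le i
    rcases eq_or_ne i r with rfl | hi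
    · rw [Function.update_self] at this; omega
    · rwa [Function.update_of_ne hi] at this
  eq_off i hi := by
    rw [h.eq_off i hi, Function.update_of_ne (ne_of_mem_of_not_mem hr hi).symm]
  le_max i := by
    have := h.le_max i
    rcases eq_or_ne i r with rfl | hi
    · rw [Function.update_self] at this; omega
    · rwa [Function.update_of_ne hi] at this
  eq_or_eq := by
    obtain ⟨r₀, h₀⟩ := h.eq_or_eq
    refine ⟨r₀, fun i hi ↦ ?_⟩
    have := h₀ i hi
    rcases eq_or_ne i r with rfl | hir
    · rw [Function.update_self, or_self] at this; exact Or.inr this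
    · rwa [Function.update_of_ne hir] at this

theorem isRaise_update {I : Finset ℕ} {M x : ℤ} {w : ℕ → ℤ} {r : ℕ} (hr : r ∈ I)
    (hx : w r ≤ x) (hxM : x ≤ M) : IsRaise I M w (Function.update w r x) where
  le i := by rcases eq_or_ne i r with rfl | hi <;> simp [*]
  eq_off i hi := Function.update_of_ne (ne_of_mem_of_not_mem hr hi).symm ..
  le_max i := by rcases eq_or_ne i r with rfl | hi <;> simp [*]
  eq_or_eq := ⟨r, fun i hi ↦ Or.inl (Function.update_of_ne hi ..)⟩

theorem exists_isRaise_of_le {m R p : ℕ} {M T : ℤ} {w : ℕ → ℤ} (hm : m + 1 ≤ R)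
    (hp : p ∈ Finset.Icc 1 m) (hMp : M ≤ w p) (hT : ∑ i ∈ Finset.Icc 1 m, w i ≤ T)
    (hTM : T ≤ m * M) :
    ∃ w', IsRaise (Finset.Icc 1 m) M w w' ∧ ∑ i ∈ Finset.Icc 1 m, w' i = T ∧
      rowVar w' R ≤ rowVar w R := by
  induction hq : (T - ∑ i ∈ Finset.Icc 1 m, w i).toNat using Nat.strong_induction_on
    generalizing w with
  | _ q ih =>
  subst hq
  rcases hT.eq_or_lt with hT | hT
  · exact ⟨w, ⟨fun _ ↦ le_rfl, fun _ _ ↦ rfl, fun _ ↦ le_max_left _ _, 0, fun _ _ ↦ Or.inl rfl⟩,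
      hT, le_rfl⟩
  obtain ⟨i, hi, hiM⟩ : ∃ i ∈ Finset.Icc 1 m, w i < M :=
    Finset.exists_lt_of_sum_lt (by simpa using hT.trans_le hTM)
  obtain ⟨r, hr, hrM, hadj⟩ := exists_lt_of_adjacent_ge hp hMp hi hiM
  have hrR : r + 2 ≤ R := by rw [Finset.mem_Icc] at hr; omega
  rcases le_total (w (r + 1) + (T - ∑ i ∈ Finset.Icc 1 m, w i)) M with hlast | hmore
  · refine ⟨_, isRaise_update hr (by omega) hlast, ?_, rowVar_update_le hrR ?_ ?_⟩
    · rw [sum_update_eq_add hr]; ring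
    · omega
    · exact hlast.trans hadj
  · have hsum := sum_update_eq_add hr w M
    have hMp' : M ≤ Function.update w (r + 1) M p := by
      rcases eq_or_ne p (r + 1) with rfl | h <;> simp [*]
    obtain ⟨w', hw', hw'T, hvar⟩ := ih _ (by omega) hMp' (by omega) rfl
    exact ⟨w', hw'.of_update hr hrM.le, hw'T, hvar.trans (rowVar_update_le hrR hrM.le hadj)⟩

theorem exists_isRaise {m R : ℕ} {n T : ℤ} {w : ℕ → ℤ} (hm0 : 0 < m) (hm : m + 1 ≤ R)
    (hw : ∀ r, w r ≤ n) (hT : ∑ i ∈ Finset.Icc 1 m, w i ≤ T) (hTn : T ≤ m * n) :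
    ∃ M w', IsRaise (Finset.Icc 1 m) M w w' ∧ M ≤ n ∧ T ≤ m * M ∧
      ∑ i ∈ Finset.Icc 1 m, w' i = T ∧
      m * rowVar w' R ≤ m * rowVar w R + 2 * (T - ∑ i ∈ Finset.Icc 1 m, w i + m) := by
  -- The level is the height of a tallest row `p` if that leaves enough room. Otherwise `p` is first
  -- raised to the smallest sufficient level: it is at least of average height, so this is cheap.
  obtain ⟨p, hp, hmax⟩ := Finset.exists_max_image (Finset.Icc 1 m) w (Finset.nonempty_Icc.2 hm0)
  have hm0' : (0 : ℤ) < m := by exact_mod_cast hm0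
  by_cases hTp : T ≤ m * w p
  · obtain ⟨w', hw', hsum, hvar⟩ := exists_isRaise_of_le hm hp le_rfl hT hTp
    exact ⟨w p, w', hw', hw p, hTp, hsum, by nlinarith⟩
  push Not at hTp
  obtain ⟨M, hM, hM'⟩ : ∃ M : ℤ, T ≤ m * M ∧ m * M < T + m := by
    refine ⟨-(-T / m), ?_, ?_⟩
    · linarith [Int.mul_ediv_self_le (x := -T) hm0'.ne']
    · linarith [Int.lt_mul_ediv_self_add (x := -T) hm0']
  have hpM : w p < M := by nlinarith
  have hsum_le : ∑ i ∈ Finset.Icc 1 m, w i ≤ m * w p := by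
    simpa using Finset.sum_le_card_nsmul _ _ _ hmax
  have hsum := sum_update_eq_add hp w M
  have hroom : M - w p ≤ T - m * w p := by nlinarith
  obtain ⟨i, rfl⟩ : ∃ i, p = i + 1 := ⟨p - 1, by rw [Finset.mem_Icc] at hp; omega⟩
  obtain ⟨w', hw', hw'T, hvar⟩ :=
    exists_isRaise_of_le (w := Function.update w (i + 1) M) hm hp (by simp) (by linarith) hM
  have hvar' := hvar.trans
    (rowVar_update_le_add (i := i) (by rw [Finset.mem_Icc] at hp; omega) hpM.le)
  exact ⟨M, w', hw'.of_update hp hpM.le, by nlinarith, hM, hw'T, by nlinarith⟩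

theorem card_partialRows_le_of_isRaise {m R : ℕ} {M n : ℤ} {w w' : ℕ → ℤ}
    (h : IsRaise (Finset.Icc 1 m) M w w') (hw : ∀ r, 0 ≤ w r) :
    ∃ l : ℕ, (partialRows n w' R).card ≤ (partialRows n w R).card + 1 + l ∧
      l * M ≤ ∑ i ∈ Finset.Icc 1 m, w' i - ∑ i ∈ Finset.Icc 1 m, w i := by
  obtain ⟨r₀, h₀⟩ := h.eq_or_eq
  let filled : Finset ℕ := {r ∈ Finset.Icc 1 m | w r = 0 ∧ w' r = M}
  refine ⟨filled.card, ?_, ?_⟩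
  · have hsub : partialRows n w' R ⊆ partialRows n w R ∪ {r₀} ∪ filled := by
      intro r hr
      simp only [partialRows, filled, Finset.mem_union, Finset.mem_filter, Finset.mem_singleton]
        at hr ⊢
      have := h.le r
      have := hw r
      by_cases hI : r ∈ Finset.Icc 1 m
      · by_cases hr₀ : r = r₀
        · tauto
        · have := h₀ r hr₀
          grind
      · have := h.eq_off r hI
        grind
    refine (Finset.card_le_card hsub).trans ((Finset.card_union_le _ _).trans ?_)
    gcongr
    exact Finset.card_union_le _ _
  · calc (filled.card : ℤ) * M = ∑ r ∈ filled, (w' r - w r) := by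
          rw [← nsmul_eq_mul, ← Finset.sum_const]
          refine Finset.sum_congr rfl fun r hr ↦ ?_
          obtain ⟨-, hr, hr'⟩ := Finset.mem_filter.1 hr
          rw [hr, hr', sub_zero]
      _ ≤ ∑ r ∈ Finset.Icc 1 m, (w' r - w r) :=
          Finset.sum_le_sum_of_subset_of_nonneg (Finset.filter_subset _ _)
            fun r _ _ ↦ sub_nonneg.2 (h.le r)
      _ = _ := Finset.sum_sub_distrib ..

/-- `w'` is a profile with entries in `[0, n]` that differs from `w` only in the rows `1, …, m`,
where it has sum `T`, at a cost in variation and partial rows of at most the order of the required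
change of that sum; `c` is a lower bound for `T` and `m * n - T`. -/
structure IsAdjustment (n m R : ℕ) (c T : ℤ) (w w' : ℕ → ℤ) : Prop where
  mem_Icc : ∀ r, w' r ∈ Icc (0 : ℤ) n
  eq_off : ∀ r ∉ Finset.Icc 1 m, w' r = w r
  sum_eq : ∑ i ∈ Finset.Icc 1 m, w' i = T
  sum_abs : ∑ i ∈ Finset.Icc 1 m, |w' i - w i| = |T - ∑ i ∈ Finset.Icc 1 m, w i|
  rowVar_le : m * rowVar w' R ≤ m * rowVar w R + 2 * (|T - ∑ i ∈ Finset.Icc 1 m, w i| + m)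
  partialRows_le : c * (partialRows (n : ℤ) w' R).card ≤
    c * ((partialRows (n : ℤ) w R).card + 1) + m * |T - ∑ i ∈ Finset.Icc 1 m, w i|

theorem rowVar_const_sub (n : ℤ) (w : ℕ → ℤ) (R : ℕ) :
    rowVar (fun r ↦ n - w r) R = rowVar w R := by
  unfold rowVar
  simp only [sub_sub_sub_cancel_left, abs_sub_comm]

theorem partialRows_const_sub (n : ℤ) (w : ℕ → ℤ) (R : ℕ) :
    partialRows n (fun r ↦ n - w r) R = partialRows n w R := by
  unfold partialRows
  grind

theorem IsAdjustment.of_const_sub {n m R : ℕ} {c T : ℤ} {w w' : ℕ → ℤ}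
    (h : IsAdjustment n m R c (m * n - T) (fun r ↦ n - w r) w') :
    IsAdjustment n m R c T w (fun r ↦ n - w' r) := by
  have hchange : |(m * n - T : ℤ) - ∑ i ∈ Finset.Icc 1 m, (n - w i)| =
      |T - ∑ i ∈ Finset.Icc 1 m, w i| := by
    rw [Finset.sum_sub_distrib, ← abs_neg]
    simp
  obtain ⟨h_mem, h_off, h_sum, h_abs, h_var, h_partial⟩ := h
  rw [hchange] at h_abs h_var h_partial
  rw [rowVar_const_sub] at h_var
  rw [partialRows_const_sub] at h_partial
  refine ⟨fun r ↦ ?_, fun r hr ↦ ?_, ?_, ?_, ?_, ?_⟩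
  · simpa [and_comm] using h_mem r
  · rw [h_off r hr, sub_sub_cancel]
  · simp [Finset.sum_sub_distrib, h_sum]
  · rw [← h_abs]
    refine Finset.sum_congr rfl fun i _ ↦ ?_
    rw [← abs_neg]
    ring_nf
  · rwa [rowVar_const_sub]
  · rwa [partialRows_const_sub]

theorem exists_isAdjustment {n m R : ℕ} {c T : ℤ} {w : ℕ → ℤ} (hm0 : 0 < m) (hm : m + 1 ≤ R)
    (hw : ∀ r, w r ∈ Icc (0 : ℤ) n) (hc : 0 ≤ c) (hcT : c ≤ T) (hTc : T ≤ m * n - c) :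
    ∃ w', IsAdjustment n m R c T w w' := by
  wlog hT : ∑ i ∈ Finset.Icc 1 m, w i ≤ T generalizing w T
  · obtain ⟨w', hw'⟩ := this (w := fun r ↦ n - w r) (T := m * n - T)
      (fun r ↦ by simpa [and_comm] using hw r) (by omega) (by omega)
      (by simp [Finset.sum_sub_distrib]; omega)
    exact ⟨_, hw'.of_const_sub⟩
  obtain ⟨M, w', hraise, hMn, hTM, hsum, hvar⟩ :=
    exists_isRaise hm0 hm (fun r ↦ (hw r).2) hT (by omega)
  obtain ⟨l, hl, hlM⟩ :=
    card_partialRows_le_of_isRaise (n := n) (R := R) hraise fun r ↦ (hw r).1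
  have habs : |T - ∑ i ∈ Finset.Icc 1 m, w i| = T - ∑ i ∈ Finset.Icc 1 m, w i :=
    abs_of_nonneg (by omega)
  refine ⟨w', fun r ↦ ⟨(hw r).1.trans (hraise.le r), ?_⟩, hraise.eq_off, hsum, ?_, ?_, ?_⟩
  · exact (hraise.le_max r).trans (max_le (hw r).2 hMn)
  · rw [habs, ← hsum, ← Finset.sum_sub_distrib]
    exact Finset.sum_congr rfl fun r _ ↦ abs_of_nonneg (sub_nonneg.2 (hraise.le r))
  · rwa [habs]
  · have hcl : c * l ≤ m * (T - ∑ i ∈ Finset.Icc 1 m, w i) := calc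
      c * l ≤ (m * M) * l := by gcongr; omega
      _ = m * (l * M) := by ring
      _ ≤ m * (T - ∑ i ∈ Finset.Icc 1 m, w i) := by gcongr; omega
    rw [habs]
    have hl' : ((partialRows (n : ℤ) w' R).card : ℤ) ≤ (partialRows (n : ℤ) w R).card + 1 + l := by
      exact_mod_cast hl
    nlinarith [mul_le_mul_of_nonneg_left hl' hc]

/-- Integer rounding of a real sequence, each term being rounded towards the preceding rounded
value, so that rounding creates no new oscillation. -/
def stickyRound (y : ℕ → ℝ) : ℕ → ℤ
  | 0 => ⌊y 0⌋
  | r + 1 => if (stickyRound y r : ℝ) ≤ y (r + 1) then ⌊y (r + 1)⌋ else ⌈y (r + 1)⌉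

theorem stickyRound_eq_floor_or_ceil (y : ℕ → ℝ) (r : ℕ) :
    stickyRound y r = ⌊y r⌋ ∨ stickyRound y r = ⌈y r⌉ := by
  cases r with
  | zero => exact Or.inl rfl
  | succ r => exact ite_eq_or_eq ..

theorem abs_stickyRound_sub_le_one (y : ℕ → ℝ) (r : ℕ) : |(stickyRound y r : ℝ) - y r| ≤ 1 := by
  rw [abs_le]
  have := Int.floor_le (y r)
  have := Int.sub_one_lt_floor (y r)
  have := Int.le_ceil (y r)
  have := Int.ceil_lt_add_one (y r)
  rcases stickyRound_eq_floor_or_ceil y r with h | h <;> rw [h] <;> constructor <;> linarith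

theorem stickyRound_mem_Icc {y : ℕ → ℝ} {n r : ℕ} (hy : y r ∈ Icc (0 : ℝ) n) :
    stickyRound y r ∈ Icc (0 : ℤ) n := by
  have hn : y r ≤ (n : ℤ) := by exact_mod_cast hy.2
  rcases stickyRound_eq_floor_or_ceil y r with h | h <;> rw [h]
  · exact ⟨Int.floor_nonneg.2 hy.1, Int.cast_le.1 ((Int.floor_le _).trans hn)⟩
  · exact ⟨Int.ceil_nonneg hy.1, Int.ceil_le.2 hn⟩

theorem abs_stickyRound_succ_sub (y : ℕ → ℝ) (r : ℕ) :
    |(stickyRound y (r + 1) : ℝ) - stickyRound y r| + |y (r + 1) - stickyRound y (r + 1)| =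
      |y (r + 1) - stickyRound y r| := by
  rw [stickyRound]
  split_ifs with h
  · have h₁ := Int.floor_le (y (r + 1))
    have h₂ : (stickyRound y r : ℝ) ≤ ⌊y (r + 1)⌋ := Int.cast_le.2 (Int.le_floor.2 h)
    rw [abs_of_nonneg (by linarith), abs_of_nonneg (by linarith), abs_of_nonneg (by linarith)]
    ring
  · push Not at h
    have h₁ := Int.le_ceil (y (r + 1))
    have h₂ : (⌈y (r + 1)⌉ : ℝ) ≤ stickyRound y r := Int.cast_le.2 (Int.ceil_le.2 h.le)
    rw [abs_of_nonpos (by linarith), abs_of_nonpos (by linarith), abs_of_nonpos (by linarith)]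
    ring

theorem rowVar_stickyRound_le (y : ℕ → ℝ) (R : ℕ) :
    ((rowVar (stickyRound y) R : ℤ) : ℝ) ≤ rowVar y R + 1 := by
  have step (r : ℕ) : |(stickyRound y (r + 1) : ℝ) - stickyRound y r| ≤
      |y (r + 1) - y r| + (|y r - stickyRound y r| - |y (r + 1) - stickyRound y (r + 1)|) := by
    linarith [abs_stickyRound_succ_sub y r, abs_sub_le (y (r + 1)) (y r) (stickyRound y r)]
  have hsum := Finset.sum_le_sum fun r (_ : r ∈ Finset.range R) ↦ step r
  rw [Finset.sum_add_distrib, Finset.sum_range_sub' fun r ↦ |y r - stickyRound y r|] at hsum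
  have h0 := abs_stickyRound_sub_le_one y 0
  rw [abs_sub_comm] at h0
  have := abs_nonneg (y R - stickyRound y R)
  unfold rowVar
  push_cast
  linarith

theorem partialRows_stickyRound_subset (n : ℕ) (y : ℕ → ℝ) (R : ℕ) :
    partialRows (n : ℤ) (stickyRound y) R ⊆ partialRows (n : ℝ) y R := by
  refine Finset.monotone_filter_right _ fun r _ ⟨h0, hn⟩ ↦ ?_
  rw [← Int.cast_natCast]
  rcases stickyRound_eq_floor_or_ceil y r with h | h <;> rw [h] at h0 hn
  · exact ⟨zero_lt_one.trans_le (Int.floor_pos.1 h0), Int.floor_lt.1 hn⟩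
  · exact ⟨Int.ceil_pos.1 h0, (Int.le_ceil _).trans_lt (Int.cast_lt.2 hn)⟩

theorem rowVar_const_mul {n : ℝ} (hn : 0 ≤ n) (s : ℕ → ℝ) (R : ℕ) :
    rowVar (fun r ↦ n * s r) R = n * rowVar s R := by
  simp only [rowVar, ← mul_sub, abs_mul, abs_of_nonneg hn, Finset.mul_sum]

theorem partialRows_const_mul {n : ℝ} (hn : 0 < n) (s : ℕ → ℝ) (R : ℕ) :
    partialRows n (fun r ↦ n * s r) R = partialRows 1 s R := by
  simp only [partialRows, mul_pos_iff_of_pos_left hn, mul_lt_iff_lt_one_right hn]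

theorem sum_range_eq_ends_add_sum_Icc {M : Type*} [AddCommMonoid M] (f : ℕ → M) (m : ℕ) :
    ∑ r ∈ Finset.range (m + 2), f r = ∑ r ∈ Finset.Icc 1 m, f r + (f 0 + f (m + 1)) := by
  rw [Finset.sum_range_succ, Finset.sum_range_succ', Finset.range_eq_Ico,
    Finset.sum_Ico_add' f 0 m 1, add_assoc]
  rfl

/-- `w` is a row profile with `R` full rows of length `n`, an overhang of length `t` and exactly `k`
particles, which approximates the densities `s` with total error at most `E`; `c` measures the room
left for corrections. -/
structure IsDiscretization (n t k R : ℕ) (c E : ℝ) (s : ℕ → ℝ) (w : ℕ → ℤ) : Prop where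
  mem_Icc : ∀ r, w r ∈ Icc (0 : ℤ) n
  count : ∑ r ∈ Finset.range R, w r + max 0 (w R + t - n) = k
  end_near : ∀ r ∉ Finset.Icc 1 (R - 2), |(w r : ℝ) - n * s r| ≤ 1
  sum_abs_le : ∑ r ∈ Finset.range R, |(w r : ℝ) - n * s r| ≤ E
  rowVar_le : ((rowVar w R : ℤ) : ℝ) ≤ n * rowVar s R + 3 + 2 * E / (R - 2)
  partialRows_le : ((partialRows (n : ℤ) w R).card : ℝ) ≤
    (partialRows 1 s R).card + 1 + R * E / c

theorem sum_abs_stickyRound_sub_le (y : ℕ → ℝ) (R : ℕ) :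
    ∑ r ∈ Finset.range R, |(stickyRound y r : ℝ) - y r| ≤ R := by
  simpa using Finset.sum_le_card_nsmul (Finset.range R) _ 1
    fun r _ ↦ abs_stickyRound_sub_le_one y r

theorem sum_abs_sub_le_of_eq_off {m : ℕ} {w w₀ : ℕ → ℤ} {y : ℕ → ℝ}
    (h : ∀ r ∉ Finset.Icc 1 m, w r = w₀ r) :
    ∑ r ∈ Finset.range (m + 2), |(w r : ℝ) - y r| ≤
      ((∑ r ∈ Finset.Icc 1 m, |w r - w₀ r| : ℤ) : ℝ) +
        ∑ r ∈ Finset.range (m + 2), |(w₀ r : ℝ) - y r| := by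
  have ends : ∑ r ∈ Finset.range (m + 2), |w r - w₀ r| = ∑ r ∈ Finset.Icc 1 m, |w r - w₀ r| := by
    rw [sum_range_eq_ends_add_sum_Icc, h 0 (by simp), h (m + 1) (by simp)]
    simp
  rw [← ends, Int.cast_sum, ← Finset.sum_add_distrib]
  refine Finset.sum_le_sum fun r _ ↦ ?_
  push_cast
  exact abs_sub_le ..

theorem IsAdjustment.isDiscretization {n t k m : ℕ} {c T : ℤ} {E : ℝ} {s : ℕ → ℝ} {w : ℕ → ℤ}
    (h : IsAdjustment n m (m + 2) c T (stickyRound fun r ↦ n * s r) w) (hn : 0 < n) (hm : 0 < m)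
    (hc : 0 < c) (hcount : ∑ r ∈ Finset.range (m + 2), w r + max 0 (w (m + 2) + t - n) = k)
    (hE : (|T - ∑ r ∈ Finset.Icc 1 m, stickyRound (fun r ↦ n * s r) r| : ℤ) + (m + 2) ≤ E) :
    IsDiscretization n t k (m + 2) c E s w where
  mem_Icc := h.mem_Icc
  count := hcount
  end_near r hr := by
    rw [h.eq_off r (by simpa using hr)]
    exact abs_stickyRound_sub_le_one (fun r ↦ n * s r) r
  sum_abs_le := by
    refine (sum_abs_sub_le_of_eq_off h.eq_off).trans (le_trans ?_ hE)
    rw [h.sum_abs]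
    gcongr
    exact_mod_cast sum_abs_stickyRound_sub_le (fun r ↦ n * s r) (m + 2)
  rowVar_le := by
    have hm' : (0 : ℝ) < m := by exact_mod_cast hm
    have hvar := (Int.cast_le (R := ℝ)).2 h.rowVar_le
    have hround := rowVar_stickyRound_le (fun r ↦ n * s r) (m + 2)
    rw [rowVar_const_mul n.cast_nonneg] at hround
    push_cast at hvar hE ⊢
    rw [add_sub_cancel_right, ← sub_le_iff_le_add', le_div_iff₀ hm']
    nlinarith
  partialRows_le := by
    have hc' : (0 : ℝ) < c := by exact_mod_cast hc
    have hcard := (Int.cast_le (R := ℝ)).2 h.partialRows_le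
    have hround := Finset.card_le_card
      (partialRows_stickyRound_subset n (fun r ↦ n * s r) (m + 2))
    rw [partialRows_const_mul (by exact_mod_cast hn), ← Nat.cast_le (α := ℝ)] at hround
    push_cast at hcard hE ⊢
    rw [← sub_le_iff_le_add', le_div_iff₀ hc']
    have hmE := mul_le_mul_of_nonneg_left hE m.cast_nonneg
    have : 0 ≤ E := le_trans (by positivity) hE
    nlinarith [mul_le_mul_of_nonneg_left hround hc'.le]

theorem exists_isDiscretization {n t k m : ℕ} {c : ℤ} {s : ℕ → ℝ} (hn : 0 < n) (ht : t ≤ n)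
    (hm : 0 < m) (hs : ∀ r, s r ∈ Icc (0 : ℝ) 1) (hc : 0 < c) (hck : c + 3 * n ≤ k)
    (hkc : k + c ≤ m * n) :
    ∃ w, IsDiscretization n t k (m + 2) c
      (|k - n * ∑ r ∈ Finset.range (m + 2), s r| + 2 * (m + 2) + n) s w := by
  set w₀ := stickyRound fun r ↦ n * s r
  have hw₀ (r : ℕ) : w₀ r ∈ Icc (0 : ℤ) n :=
    stickyRound_mem_Icc ⟨mul_nonneg n.cast_nonneg (hs r).1,
      mul_le_of_le_one_right n.cast_nonneg (hs r).2⟩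
  set overhang : ℤ := max 0 (w₀ (m + 2) + t - n)
  have h0 := hw₀ 0
  have h1 := hw₀ (m + 1)
  have h2 := hw₀ (m + 2)
  rw [mem_Icc] at h0 h1 h2
  obtain ⟨w, hw⟩ := exists_isAdjustment (R := m + 2) (c := c)
    (T := k - overhang - (w₀ 0 + w₀ (m + 1))) hm (by omega) hw₀ hc.le (by omega) (by omega)
  refine ⟨w, hw.isDiscretization hn hm hc ?_ ?_⟩
  · rw [sum_range_eq_ends_add_sum_Icc, hw.sum_eq, hw.eq_off 0 (by simp),
      hw.eq_off (m + 1) (by simp), hw.eq_off (m + 2) (by simp)]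
    omega
  have hchange : (k - overhang - (w₀ 0 + w₀ (m + 1)) - ∑ r ∈ Finset.Icc 1 m, w₀ r : ℤ) =
      k - ∑ r ∈ Finset.range (m + 2), w₀ r - overhang := by
    rw [sum_range_eq_ends_add_sum_Icc]
    ring
  have hround : |n * ∑ r ∈ Finset.range (m + 2), s r - ∑ r ∈ Finset.range (m + 2), (w₀ r : ℝ)| ≤
      m + 2 := by
    rw [Finset.mul_sum, ← Finset.sum_sub_distrib]
    refine (Finset.abs_sum_le_sum_abs _ _).trans ?_
    simpa only [abs_sub_comm, Nat.cast_add, Nat.cast_ofNat] using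
      sum_abs_stickyRound_sub_le (fun r ↦ n * s r) (m + 2)
  have hoverhang : |(overhang : ℝ)| ≤ n := by
    rw [← Int.cast_abs, ← Int.cast_natCast, Int.cast_le, abs_of_nonneg] <;> omega
  rw [hchange]
  push_cast
  have := abs_sub_le (k : ℝ) (n * ∑ r ∈ Finset.range (m + 2), s r)
    (∑ r ∈ Finset.range (m + 2), (w₀ r : ℝ))
  have := abs_sub (k - ∑ r ∈ Finset.range (m + 2), (w₀ r : ℝ)) (overhang : ℝ)
  linarith

/-! ### Sampling a function row by row -/

theorem intervalIntegrable_comp_floor {E : Type*} [NormedAddCommGroup E] (G : ℕ → E) (r : ℕ) :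
    IntervalIntegrable (fun x : ℝ ↦ G ⌊x⌋₊) volume r (r + 1 : ℕ) :=
  (intervalIntegrable_const (c := G r)).congr_uIoo fun x hx ↦ by
    rw [uIoo_of_le (by simp)] at hx
    rw [(Nat.floor_eq_iff (r.cast_nonneg.trans hx.1.le)).2 ⟨hx.1.le, by simpa using hx.2⟩]

theorem integral_comp_floor {E : Type*} [NormedAddCommGroup E] [NormedSpace ℝ E] [CompleteSpace E]
    (G : ℕ → E) (R : ℕ) : ∫ x in (0 : ℝ)..R, G ⌊x⌋₊ = ∑ r ∈ Finset.range R, G r := by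
  rw [← Nat.cast_zero, ← intervalIntegral.sum_integral_adjacent_intervals
    fun r _ ↦ intervalIntegrable_comp_floor G r]
  refine Finset.sum_congr rfl fun r _ ↦ ?_
  rw [intervalIntegral.integral_congr_Ioo_of_le (g := fun _ ↦ G r) (by simp)]
  · simp
  · intro x hx
    simp only [(Nat.floor_eq_iff (r.cast_nonneg.trans hx.1.le)).2 ⟨hx.1.le, by simpa using hx.2⟩]

theorem integral_comp_floor_mul {E : Type*} [NormedAddCommGroup E] [NormedSpace ℝ E]
    [CompleteSpace E] (G : ℕ → E) {n : ℝ} (hn : n ≠ 0) (R : ℕ) :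
    ∫ x in (0 : ℝ)..(R / n), G ⌊n * x⌋₊ = n⁻¹ • ∑ r ∈ Finset.range R, G r := by
  rw [intervalIntegral.integral_comp_mul_left (fun x ↦ G ⌊x⌋₊) hn, mul_zero,
    mul_div_cancel₀ _ hn, integral_comp_floor]

theorem measurable_comp_floor_mul {α : Type*} [MeasurableSpace α] (G : ℕ → α) (n : ℝ) :
    Measurable fun x : ℝ ↦ G ⌊n * x⌋₊ :=
  (Measurable.of_discrete (f := G)).comp (Nat.measurable_floor.comp (measurable_const_mul _))

theorem tendsto_natFloor_const_mul_div {ι : Type*} {l : Filter ι} {n : ι → ℕ}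
    (hn : Tendsto n l atTop) {x : ℝ} (hx : 0 ≤ x) :
    Tendsto (fun i ↦ (⌊x * n i⌋₊ : ℝ) / n i) l (nhds x) :=
  (tendsto_nat_floor_mul_div_atTop hx).comp (tendsto_natCast_atTop_atTop.comp hn)

theorem floor_mul_div_le {L : ℝ} (hL : 0 ≤ L) (n : ℕ) : (⌊L * n⌋₊ : ℝ) / n ≤ L :=
  div_le_of_le_mul₀ n.cast_nonneg hL (Nat.floor_le (by positivity))

theorem eventually_le_floor_mul {L : ℝ} (hL : 0 < L) (K : ℕ) :
    ∀ᶠ n : ℕ in atTop, K ≤ ⌊L * n⌋₊ :=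
  (tendsto_nat_floor_atTop.comp
    (tendsto_natCast_atTop_atTop.const_mul_atTop hL)).eventually_ge_atTop K

theorem eventually_floor_mul_lt {x L : ℝ} (hx : 0 ≤ x) (hxL : x < L) :
    ∀ᶠ n : ℕ in atTop, ⌊(n : ℝ) * x⌋₊ < ⌊L * n⌋₊ := by
  filter_upwards [(tendsto_natFloor_const_mul_div tendsto_id hx).eventually_lt
    (tendsto_natFloor_const_mul_div tendsto_id (hx.trans hxL.le)) hxL] with n h
  rw [mul_comm]
  exact Nat.cast_lt.1 (lt_imp_lt_of_le_imp_le (div_le_div_of_nonneg_right · n.cast_nonneg) h)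

/-- The open interval `(r/n, (r+1)/n)` of macroscopic positions in row `r`. -/
def rowInterval (n r : ℕ) : Set ℝ := Ioo (r / n) ((r + 1) / n)

/-- A point of the row interval `(r/n, (r+1)/n)` at which `v` takes the value `0` or `1`, if there
is one, and the midpoint otherwise. With this choice a row is sampled as partially filled only if
`0 < v < 1` on the whole row. -/
def samplePoint (v : ℝ → ℝ) (n r : ℕ) : ℝ :=
  if h : ∃ x ∈ rowInterval n r, v x = 0 ∨ v x = 1 then h.choose else (r + 1 / 2) / n

/-- The index `r`, clipped to the indices of the `⌊Ln⌋` row intervals contained in `(0, L)`. -/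
def clipRow (L : ℝ) (n r : ℕ) : ℕ := min r (⌊L * n⌋₊ - 1)

/-- The value of `v` sampled in row `r`; the overhanging row `r = ⌊Ln⌋` and all further ones repeat
the last full row. -/
def rowSample (L : ℝ) (v : ℝ → ℝ) (n r : ℕ) : ℝ := v (samplePoint v n (clipRow L n r))

theorem floor_mul_of_mem_rowInterval {n r : ℕ} {x : ℝ} (hn : 0 < n) (hx : x ∈ rowInterval n r) :
    ⌊(n : ℝ) * x⌋₊ = r := by
  have hn' : (0 : ℝ) < n := mod_cast hn
  have hrx := (div_lt_iff₀' hn').1 hx.1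
  exact (Nat.floor_eq_iff (r.cast_nonneg.trans hrx.le)).2 ⟨hrx.le, (lt_div_iff₀' hn').1 hx.2⟩

theorem pairwiseDisjoint_rowInterval {n : ℕ} (hn : 0 < n) (s : Set ℕ) :
    s.PairwiseDisjoint (rowInterval n) := fun _ _ _ _ hij ↦
  Set.disjoint_left.2 fun _ hx hy ↦ hij <|
    (floor_mul_of_mem_rowInterval hn hx).symm.trans (floor_mul_of_mem_rowInterval hn hy)

theorem volume_real_rowInterval (n r : ℕ) : volume.real (rowInterval n r) = 1 / n := by
  rw [rowInterval, Real.volume_real_Ioo_of_le (by gcongr; linarith), ← sub_div, add_sub_cancel_left]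

theorem rowInterval_subset_Ioo {L : ℝ} {n r : ℕ} (hL : 0 ≤ L) (hr : r < ⌊L * n⌋₊) :
    rowInterval n r ⊆ Ioo 0 L := by
  refine Ioo_subset_Ioo (by positivity) (le_trans ?_ (floor_mul_div_le hL n))
  gcongr
  exact_mod_cast hr

theorem clipRow_lt {L : ℝ} {n : ℕ} (hR : 1 ≤ ⌊L * n⌋₊) (r : ℕ) : clipRow L n r < ⌊L * n⌋₊ := by
  grind [clipRow]

theorem clipRow_of_lt {L : ℝ} {n r : ℕ} (hr : r < ⌊L * n⌋₊) : clipRow L n r = r := by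
  grind [clipRow]

section Sampling

variable {L : ℝ} {n : ℕ} {v : ℝ → ℝ}

theorem samplePoint_mem_rowInterval (v : ℝ → ℝ) (hn : 0 < n) (r : ℕ) :
    samplePoint v n r ∈ rowInterval n r := by
  have hn' : (0 : ℝ) < n := mod_cast hn
  rw [samplePoint]
  split_ifs with h
  · exact h.choose_spec.1
  · exact ⟨div_lt_div_of_pos_right (by linarith) hn', div_lt_div_of_pos_right (by linarith) hn'⟩

theorem monotone_samplePoint (v : ℝ → ℝ) (hn : 0 < n) : Monotone (samplePoint v n) :=
  monotone_nat_of_le_succ fun r ↦ (samplePoint_mem_rowInterval v hn r).2.le.trans <| by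
    simpa using (samplePoint_mem_rowInterval v hn (r + 1)).1.le

theorem ne_zero_and_ne_one_of_samplePoint {r : ℕ} (h0 : v (samplePoint v n r) ≠ 0)
    (h1 : v (samplePoint v n r) ≠ 1) {x : ℝ} (hx : x ∈ rowInterval n r) : v x ≠ 0 ∧ v x ≠ 1 := by
  by_contra hcon
  have hex : ∃ x ∈ rowInterval n r, v x = 0 ∨ v x = 1 := ⟨x, hx, by tauto⟩
  rw [samplePoint, dif_pos hex] at h0 h1
  exact hex.choose_spec.2.elim h0 h1

theorem samplePoint_clipRow_mem_Ioo (v : ℝ → ℝ) (hL : 0 ≤ L) (hn : 0 < n) (hR : 1 ≤ ⌊L * n⌋₊)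
    (r : ℕ) : samplePoint v n (clipRow L n r) ∈ Ioo 0 L :=
  rowInterval_subset_Ioo hL (clipRow_lt hR r) (samplePoint_mem_rowInterval v hn _)

theorem eventually_samplePoint_clipRow_mem_Ioo (v : ℝ → ℝ) (hL : 0 < L) :
    ∀ᶠ n : ℕ in atTop, ∀ r, samplePoint v n (clipRow L n r) ∈ Ioo 0 L := by
  filter_upwards [eventually_le_floor_mul hL 1, eventually_gt_atTop 0] with n hR hn
  exact samplePoint_clipRow_mem_Ioo v hL.le hn hR

theorem eventually_rowSample_mem_Icc (hL : 0 < L) (hv : MapsTo v (Ioo 0 L) (Icc 0 1)) :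
    ∀ᶠ n : ℕ in atTop, ∀ r, rowSample L v n r ∈ Icc (0 : ℝ) 1 :=
  (eventually_samplePoint_clipRow_mem_Ioo v hL).mono fun _ hn r ↦ hv (hn r)

theorem rowVar_rowSample_le (hL : 0 ≤ L) (hbv : BoundedVariationOn v (Ioo 0 L)) (hn : 0 < n)
    (hR : 1 ≤ ⌊L * n⌋₊) (M : ℕ) :
    rowVar (rowSample L v n) M ≤ (eVariationOn v (Ioo 0 L)).toReal := by
  have hmono : Monotone fun r ↦ samplePoint v n (clipRow L n r) := fun i j hij ↦
    monotone_samplePoint v hn (min_le_min_right _ hij)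
  have h := ENNReal.toReal_mono hbv (eVariationOn.sum_le (f := v) (n := M) hmono
    (samplePoint_clipRow_mem_Ioo v hL hn hR))
  rw [ENNReal.toReal_sum fun _ _ ↦ edist_ne_top _ _] at h
  simpa only [← dist_edist, Real.dist_eq, rowVar, rowSample] using h

theorem card_partialRows_rowSample_le (hL : 0 ≤ L) (hv : MapsTo v (Ioo 0 L) (Icc 0 1))
    (hn : 0 < n) :
    ((partialRows 1 (rowSample L v n) ⌊L * n⌋₊).card : ℝ) ≤
      n * volume.real {x ∈ Ioo 0 L | 0 < v x ∧ v x < 1} := by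
  set S := partialRows 1 (rowSample L v n) ⌊L * n⌋₊
  have hsub : (⋃ r ∈ S, rowInterval n r) ⊆ {x ∈ Ioo 0 L | 0 < v x ∧ v x < 1} := by
    refine iUnion₂_subset fun r hr x hx ↦ ?_
    obtain ⟨hrR, hr0, hr1⟩ := Finset.mem_filter.1 hr
    rw [Finset.mem_range] at hrR
    rw [rowSample, clipRow_of_lt hrR] at hr0 hr1
    have hxL := rowInterval_subset_Ioo hL hrR hx
    have hx01 := ne_zero_and_ne_one_of_samplePoint hr0.ne' hr1.ne hx
    exact ⟨hxL, (hv hxL).1.lt_of_ne hx01.1.symm, (hv hxL).2.lt_of_ne hx01.2⟩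
  have hfin : volume {x ∈ Ioo 0 L | 0 < v x ∧ v x < 1} ≠ ∞ :=
    measure_ne_top_of_subset (sep_subset _ _) (by simp)
  have h := measureReal_mono hsub hfin
  rw [measureReal_biUnion_finset (pairwiseDisjoint_rowInterval hn _) (fun _ _ ↦ measurableSet_Ioo)
    (fun _ _ ↦ measure_Ioo_lt_top.ne)] at h
  simp only [volume_real_rowInterval, Finset.sum_const, nsmul_eq_mul, mul_one_div] at h
  rwa [div_le_iff₀' (by exact_mod_cast hn)] at h

theorem tendsto_samplePoint_floor (v : ℝ → ℝ) {x : ℝ} (hx : x ∈ Ioo 0 L) :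
    Tendsto (fun n : ℕ ↦ samplePoint v n (clipRow L n ⌊(n : ℝ) * x⌋₊)) atTop (nhds x) := by
  have hfloor : Tendsto (fun n : ℕ ↦ (⌊(n : ℝ) * x⌋₊ : ℝ) / n) atTop (nhds x) := by
    simpa only [mul_comm] using tendsto_natFloor_const_mul_div (n := fun n ↦ n) tendsto_id hx.1.le
  have hmem : ∀ᶠ n : ℕ in atTop,
      samplePoint v n (clipRow L n ⌊(n : ℝ) * x⌋₊) ∈ rowInterval n ⌊(n : ℝ) * x⌋₊ := by
    filter_upwards [eventually_floor_mul_lt hx.1.le hx.2, eventually_gt_atTop 0] with n hlt hn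
    rw [clipRow_of_lt hlt]
    exact samplePoint_mem_rowInterval v hn _
  refine tendsto_of_tendsto_of_tendsto_of_le_of_le' hfloor
    (by simpa using hfloor.add tendsto_one_div_atTop_nhds_zero_nat)
    (hmem.mono fun n hn ↦ hn.1.le) (hmem.mono fun n hn ↦ ?_)
  simpa [add_div] using hn.2.le

theorem ae_tendsto_rowSample_floor (hbv : BoundedVariationOn v (Ioo 0 L)) :
    ∀ᵐ x ∂volume.restrict (Ioo 0 L),
      Tendsto (fun n : ℕ ↦ rowSample L v n ⌊(n : ℝ) * x⌋₊) atTop (nhds (v x)) := by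
  rw [ae_restrict_iff' measurableSet_Ioo]
  filter_upwards [hbv.locallyBoundedVariationOn.ae_differentiableWithinAt_of_mem] with x hx hxL
  exact ((hx hxL).differentiableAt (isOpen_Ioo.mem_nhds hxL)).continuousAt.tendsto.comp
    (tendsto_samplePoint_floor v hxL)

theorem tendsto_rowSample_zero (hL : 0 < L) {a : ℝ}
    (ha : Tendsto v (nhdsWithin 0 (Ioo 0 L)) (nhds a)) :
    Tendsto (fun n : ℕ ↦ rowSample L v n 0) atTop (nhds a) := by
  have hmem := eventually_samplePoint_clipRow_mem_Ioo v hL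
  refine ha.comp (tendsto_nhdsWithin_iff.2 ⟨?_, hmem.mono fun n hn ↦ hn 0⟩)
  refine squeeze_zero' (hmem.mono fun n hn ↦ (hn 0).1.le) ?_ tendsto_one_div_atTop_nhds_zero_nat
  filter_upwards [eventually_gt_atTop 0] with n hn
  simpa [clipRow] using (samplePoint_mem_rowInterval v hn 0).2.le

theorem tendsto_rowSample_last (hL : 0 < L) {b : ℝ}
    (hb : Tendsto v (nhdsWithin L (Ioo 0 L)) (nhds b)) :
    Tendsto (fun n : ℕ ↦ rowSample L v n (⌊L * n⌋₊ - 1)) atTop (nhds b) := by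
  have hmem := eventually_samplePoint_clipRow_mem_Ioo v hL
  refine hb.comp (tendsto_nhdsWithin_iff.2 ⟨?_, hmem.mono fun n hn ↦ hn _⟩)
  have hlow : Tendsto (fun n : ℕ ↦ (⌊L * n⌋₊ : ℝ) / n - 1 / n) atTop (nhds L) := by
    simpa using (tendsto_natFloor_const_mul_div tendsto_id hL.le).sub
      tendsto_one_div_atTop_nhds_zero_nat
  refine tendsto_of_tendsto_of_tendsto_of_le_of_le' hlow tendsto_const_nhds ?_
    (hmem.mono fun n hn ↦ (hn _).2.le)
  filter_upwards [eventually_le_floor_mul hL 1, eventually_gt_atTop 0] with n hR hn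
  rw [← sub_div, ← Nat.cast_pred hR, clipRow, min_self]
  exact (samplePoint_mem_rowInterval v hn _).1.le

theorem rowSample_floor_eq_rowSample_pred (L : ℝ) (v : ℝ → ℝ) (n : ℕ) :
    rowSample L v n ⌊L * n⌋₊ = rowSample L v n (⌊L * n⌋₊ - 1) := by
  grind [rowSample, clipRow]

/-- The function `h` frozen on each row interval at the left endpoint `r/n`, and cut off past the
last full row; it turns sums over rows into integrals. -/
def rowStep (L : ℝ) (h : ℝ → ℝ) (n : ℕ) : ℝ → ℝ :=
  (Iio ((⌊L * n⌋₊ : ℝ) / n)).indicator fun x ↦ h (⌊(n : ℝ) * x⌋₊ / n)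

theorem measurable_rowStep (L : ℝ) (h : ℝ → ℝ) (n : ℕ) : Measurable (rowStep L h n) :=
  (measurable_comp_floor_mul (fun r ↦ h (r / n)) n).indicator measurableSet_Iio

theorem exists_abs_rowStep_le {h : ℝ → ℝ} (hL : 0 ≤ L) (hh : Continuous h) :
    ∃ M, ∀ n x, |rowStep L h n x| ≤ M := by
  obtain ⟨M, hM⟩ := (isCompact_Icc (a := 0) (b := L)).exists_bound_of_continuousOn hh.continuousOn
  refine ⟨M, fun n x ↦ ?_⟩
  rw [rowStep, indicator_apply]
  split_ifs with hx
  · refine hM _ ⟨by positivity, le_trans ?_ (floor_mul_div_le hL n)⟩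
    obtain rfl | hn := n.eq_zero_or_pos
    · simp
    refine div_le_div_of_nonneg_right (Nat.cast_le.2 ?_) n.cast_nonneg
    exact Nat.floor_le_of_le ((lt_div_iff₀' (Nat.cast_pos.2 hn)).1 (mem_Iio.1 hx)).le
  · simpa using (norm_nonneg _).trans (hM 0 ⟨le_rfl, hL⟩)

theorem tendsto_rowStep {h : ℝ → ℝ} (hh : Continuous h) {x : ℝ} (hx : x ∈ Ioo 0 L) :
    Tendsto (fun n ↦ rowStep L h n x) atTop (nhds (h x)) := by
  have hfloor : Tendsto (fun n : ℕ ↦ (⌊(n : ℝ) * x⌋₊ : ℝ) / n) atTop (nhds x) := by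
    simpa only [mul_comm] using tendsto_natFloor_const_mul_div (n := fun n ↦ n) tendsto_id hx.1.le
  have hlast := tendsto_natFloor_const_mul_div (n := fun n ↦ n) tendsto_id (hx.1.trans hx.2).le
  refine ((hh.tendsto x).comp hfloor).congr' ?_
  filter_upwards [hlast.eventually_const_lt hx.2] with n hn
  rw [rowStep, indicator_of_mem (mem_Iio.2 hn), Function.comp_apply]

theorem setIntegral_mul_rowStep (hL : 0 ≤ L) (f h : ℝ → ℝ) (n : ℕ) :
    ∫ x in Ioo 0 L, f x * rowStep L h n x =
      ∫ x in (0 : ℝ)..(⌊L * n⌋₊ / n), f x * h (⌊(n : ℝ) * x⌋₊ / n) := by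
  simp only [rowStep, ← indicator_mul_right]
  rw [setIntegral_indicator measurableSet_Iio, intervalIntegral.integral_of_le (by positivity),
    integral_Ioc_eq_integral_Ioo, Ioo_inter_Iio, min_eq_right (floor_mul_div_le hL n)]

theorem integral_rowSample_mul_rowStep (hL : 0 ≤ L) (hn : 0 < n) (v h : ℝ → ℝ) :
    ∫ x in Ioo 0 L, rowSample L v n ⌊(n : ℝ) * x⌋₊ * rowStep L h n x =
      1 / n * ∑ r ∈ Finset.range ⌊L * n⌋₊, rowSample L v n r * h (r / n) := by
  rw [setIntegral_mul_rowStep hL, integral_comp_floor_mul (fun r ↦ rowSample L v n r * h (r / n))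
    (by positivity), smul_eq_mul, one_div]

theorem tendsto_sum_rowSample_mul (hL : 0 < L) (hv : MapsTo v (Ioo 0 L) (Icc 0 1))
    (hbv : BoundedVariationOn v (Ioo 0 L)) {h : ℝ → ℝ} (hh : Continuous h) :
    Tendsto (fun n : ℕ ↦ 1 / n * ∑ r ∈ Finset.range ⌊L * n⌋₊, rowSample L v n r * h (r / n)) atTop
      (nhds (∫ x in Ioo 0 L, v x * h x)) := by
  obtain ⟨M, hM⟩ := exists_abs_rowStep_le hL.le hh
  suffices Tendsto (fun n : ℕ ↦ ∫ x in Ioo 0 L,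
      rowSample L v n ⌊(n : ℝ) * x⌋₊ * rowStep L h n x) atTop
      (nhds (∫ x in Ioo 0 L, v x * h x)) by
    refine this.congr' ?_
    filter_upwards [eventually_gt_atTop 0] with n hn
    exact integral_rowSample_mul_rowStep hL.le hn v h
  refine tendsto_integral_filter_of_dominated_convergence (fun _ ↦ 1 * M) ?_ ?_
    (integrableOn_const (by simp)) ?_
  · exact .of_forall fun n ↦
      ((measurable_comp_floor_mul _ _).mul (measurable_rowStep L h n)).aestronglyMeasurable
  · filter_upwards [eventually_rowSample_mem_Icc hL hv] with n hs
    refine .of_forall fun x ↦ ?_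
    rw [norm_mul]
    exact mul_le_mul (abs_le.2 ⟨by linarith [(hs ⌊n * x⌋₊).1], (hs _).2⟩) (hM n x) (norm_nonneg _)
      zero_le_one
  · filter_upwards [ae_tendsto_rowSample_floor hbv, ae_restrict_mem measurableSet_Ioo] with x hx hxL
    exact hx.mul (tendsto_rowStep hh hxL)

theorem tendsto_sum_rowSample_div (hL : 0 < L) (hv : MapsTo v (Ioo 0 L) (Icc 0 1))
    (hbv : BoundedVariationOn v (Ioo 0 L)) :
    Tendsto (fun n : ℕ ↦ (∑ r ∈ Finset.range ⌊L * n⌋₊, rowSample L v n r) / n) atTop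
      (nhds (∫ x in Ioo 0 L, v x)) := by
  simpa [div_eq_inv_mul] using tendsto_sum_rowSample_mul hL hv hbv (h := fun _ ↦ 1) continuous_const

end Sampling

/-! ### Recovery fillings -/

/-- The number of sites of `{1, …, ⌊Ln²⌋}` beyond the `⌊Ln⌋` full rows of length `n`, so that
`tauSeq L n = overhang L n / n`. -/
def overhang (L : ℝ) (n : ℕ) : ℕ := ⌊L * (n : ℝ) ^ 2⌋₊ - n * ⌊L * n⌋₊

theorem floor_mul_sq_eq {L : ℝ} (hL : 0 ≤ L) (n : ℕ) :
    ⌊L * (n : ℝ) ^ 2⌋₊ = n * ⌊L * n⌋₊ + overhang L n := by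
  refine (Nat.add_sub_cancel' (Nat.le_floor ?_)).symm
  push_cast
  nlinarith [Nat.floor_le (show 0 ≤ L * n by positivity), (n.cast_nonneg : (0 : ℝ) ≤ n)]

theorem overhang_lt {L : ℝ} (hL : 0 ≤ L) {n : ℕ} (hn : 0 < n) : overhang L n < n := by
  have hn' : (0 : ℝ) < n := mod_cast hn
  have hfloor : ⌊L * (n : ℝ) ^ 2⌋₊ < n * ⌊L * n⌋₊ + n := by
    rw [Nat.floor_lt (by positivity)]
    push_cast
    nlinarith [Nat.lt_floor_add_one (L * n)]
  have := floor_mul_sq_eq hL n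
  omega

theorem overhang_div (L : ℝ) (hL : 0 ≤ L) (n : ℕ) : (overhang L n : ℝ) / n = tauSeq L n := by
  rw [tauSeq, floor_mul_sq_eq hL]
  push_cast
  rw [add_sub_cancel_left]

/-- Fillings `w m` of the rows, for a chain of parameters `n m` with `k m` particles, that follow
`v` at cost `2 λ{0 < v < 1} + Var v` up to `o(1)` and have boundary densities `a` and `b`. -/
structure IsRecoveryFilling (L : ℝ) (v : ℝ → ℝ) (a b : ℝ) (n k : ℕ → ℕ) (w : ℕ → ℕ → ℤ) :
    Prop where
  mem_Icc : ∀ᶠ m in atTop, ∀ r, w m r ∈ Icc (0 : ℤ) (n m)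
  count : ∀ᶠ m in atTop, ∑ r ∈ Finset.range ⌊L * n m⌋₊, w m r +
    max 0 (w m ⌊L * n m⌋₊ + overhang L (n m) - n m) = k m
  tendsto_first : Tendsto (fun m ↦ (w m 0 : ℝ) / n m) atTop (nhds a)
  tendsto_last : Tendsto (fun m ↦ (w m (⌊L * n m⌋₊ - 1) : ℝ) / n m) atTop (nhds b)
  tendsto_overhang : Tendsto (fun m ↦ (w m ⌊L * n m⌋₊ : ℝ) / n m) atTop (nhds b)
  tendsto_error : Tendsto (fun m ↦
    (∑ r ∈ Finset.range ⌊L * n m⌋₊, |w m r - n m * rowSample L v (n m) r|) / (n m : ℝ) ^ 2)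
    atTop (nhds 0)
  bulk_le : ∃ B : ℕ → ℝ,
    Tendsto B atTop (nhds (2 * volume.real {x ∈ Ioo 0 L | 0 < v x ∧ v x < 1} +
      (eVariationOn v (Ioo 0 L)).toReal)) ∧
    ∀ᶠ m in atTop, 1 / (n m : ℝ) * (2 * (partialRows (n m : ℤ) (w m) ⌊L * n m⌋₊).card +
      (1 + 2 / n m) * (rowVar (w m) ⌊L * n m⌋₊ : ℤ) + 3) ≤ B m

section RecoveryFilling

variable {L κ a b : ℝ} {v : ℝ → ℝ} {n k : ℕ → ℕ}

theorem tendsto_const_div_natCast (hn : Tendsto n atTop atTop) (x : ℝ) :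
    Tendsto (fun m ↦ x / (n m : ℝ)) atTop (nhds 0) :=
  tendsto_const_nhds.div_atTop (tendsto_natCast_atTop_atTop.comp hn)

theorem tendsto_discretization_error (hL : 0 < L) (hv : MapsTo v (Ioo 0 L) (Icc 0 1))
    (hbv : BoundedVariationOn v (Ioo 0 L)) (hn : Tendsto n atTop atTop)
    (hk : Tendsto (fun m ↦ (k m : ℝ) / (n m : ℝ) ^ 2) atTop (nhds (∫ x in Ioo 0 L, v x))) :
    Tendsto (fun m ↦ (|k m - n m * ∑ r ∈ Finset.range ⌊L * n m⌋₊, rowSample L v (n m) r| +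
      2 * ⌊L * n m⌋₊ + n m) / (n m : ℝ) ^ 2) atTop (nhds 0) := by
  have hmass := (hk.sub ((tendsto_sum_rowSample_div hL hv hbv).comp hn)).abs
  have hrows := (tendsto_natFloor_const_mul_div hn hL.le).mul (tendsto_const_div_natCast hn 2)
  have h := (hmass.add hrows).add (tendsto_const_div_natCast hn 1)
  rw [sub_self, abs_zero, mul_zero, add_zero, add_zero] at h
  refine h.congr' ?_
  filter_upwards [hn.eventually_gt_atTop 0] with m hm
  have hm' : (0 : ℝ) < n m := mod_cast hm
  have hfrac (x y : ℝ) : x / (n m : ℝ) ^ 2 - y / n m = (x - n m * y) / (n m : ℝ) ^ 2 := by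
    field_simp
  rw [Function.comp_apply, hfrac, abs_div, abs_of_pos (pow_pos hm' 2)]
  field_simp

theorem exists_mass_slack (hL : 0 < L) (hn : Tendsto n atTop atTop) (hκ : κ ∈ Ioo 0 L)
    (hk : Tendsto (fun m ↦ (k m : ℝ) / (n m : ℝ) ^ 2) atTop (nhds κ)) :
    ∃ (c : ℕ → ℤ) (c₀ : ℝ), 0 < c₀ ∧
      Tendsto (fun m ↦ (c m : ℝ) / (n m : ℝ) ^ 2) atTop (nhds c₀) ∧
      ∀ᶠ m in atTop, 0 < c m ∧ c m + 3 * n m ≤ k m ∧ k m + c m ≤ (⌊L * n m⌋₊ - 2 : ℤ) * n m := by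
  obtain ⟨c₀, hc₀, hc₀κ⟩ := exists_between (lt_min hκ.1 (sub_pos.2 hκ.2))
  set c : ℕ → ℤ := fun m ↦ (⌊c₀ * (n m : ℝ) ^ 2⌋₊ : ℕ)
  have hc : Tendsto (fun m ↦ (c m : ℝ) / (n m : ℝ) ^ 2) atTop (nhds c₀) := by
    simpa [c] using tendsto_natFloor_const_mul_div (n := fun m ↦ n m ^ 2)
      ((tendsto_pow_atTop two_ne_zero).comp hn) hc₀.le
  have hlow := (hc.add (tendsto_const_div_natCast hn 3)).eventually_lt hk
    (by simpa using hc₀κ.trans_le (min_le_left _ _))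
  have hhigh := (hk.add hc).eventually_lt ((tendsto_natFloor_const_mul_div hn hL.le).sub
    (tendsto_const_div_natCast hn 2)) (by linarith [hc₀κ.trans_le (min_le_right _ _)])
  refine ⟨c, c₀, hc₀, hc, ?_⟩
  filter_upwards [hlow, hhigh, hc.eventually_const_lt hc₀, hn.eventually_gt_atTop 0]
    with m hlow hhigh hcm hm
  have hsq : (0 : ℝ) < (n m : ℝ) ^ 2 := by positivity
  have hck : (c m + 3 * n m : ℝ) < k m := by
    have := mul_lt_mul_of_pos_right hlow hsq
    field_simp at this
    linarith
  have hkc : (k m + c m : ℝ) < (⌊L * n m⌋₊ - 2) * n m := by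
    have := mul_lt_mul_of_pos_right hhigh hsq
    field_simp at this
    rwa [mul_comm L, mul_comm (_ - _)] at *
  exact ⟨Int.cast_pos.1 ((div_pos_iff_of_pos_right hsq).1 hcm), mod_cast hck.le, mod_cast hkc.le⟩

theorem exists_isDiscretization_rowSample (hL : 0 < L) (hv : MapsTo v (Ioo 0 L) (Icc 0 1))
    (hn : Tendsto n atTop atTop) (hκ : κ ∈ Ioo 0 L)
    (hk : Tendsto (fun m ↦ (k m : ℝ) / (n m : ℝ) ^ 2) atTop (nhds κ)) :
    ∃ (w : ℕ → ℕ → ℤ) (c : ℕ → ℤ) (c₀ : ℝ), 0 < c₀ ∧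
      Tendsto (fun m ↦ (c m : ℝ) / (n m : ℝ) ^ 2) atTop (nhds c₀) ∧
      ∀ᶠ m in atTop, IsDiscretization (n m) (overhang L (n m)) (k m) ⌊L * n m⌋₊ (c m)
        (|k m - n m * ∑ r ∈ Finset.range ⌊L * n m⌋₊, rowSample L v (n m) r| +
          2 * ⌊L * n m⌋₊ + n m) (rowSample L v (n m)) (w m) := by
  obtain ⟨c, c₀, hc₀, hc, hslack⟩ := exists_mass_slack hL hn hκ hk
  suffices h : ∀ᶠ m in atTop, ∃ w, IsDiscretization (n m) (overhang L (n m)) (k m) ⌊L * n m⌋₊ (c m)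
      (|k m - n m * ∑ r ∈ Finset.range ⌊L * n m⌋₊, rowSample L v (n m) r| +
        2 * ⌊L * n m⌋₊ + n m) (rowSample L v (n m)) w by
    obtain ⟨w, hw⟩ := h.choice
    exact ⟨w, c, c₀, hc₀, hc, hw⟩
  filter_upwards [hslack, hn.eventually_gt_atTop 0,
    hn.eventually (eventually_rowSample_mem_Icc hL hv),
    hn.eventually (eventually_le_floor_mul hL 3)] with m ⟨hc, hck, hkc⟩ hm hs hR
  obtain ⟨R, hR'⟩ : ∃ R, ⌊L * n m⌋₊ = R + 2 := ⟨_, (Nat.sub_add_cancel (by omega)).symm⟩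
  rw [hR'] at hkc ⊢
  simpa using exists_isDiscretization hm (overhang_lt hL.le hm).le (by omega) hs hc hck
    (by simpa using hkc)

theorem tendsto_div_of_abs_sub_mul_le_one (hn : Tendsto n atTop atTop) {x : ℕ → ℤ} {s : ℕ → ℝ}
    (hs : Tendsto s atTop (nhds a)) (hx : ∀ᶠ m in atTop, |(x m : ℝ) - n m * s m| ≤ 1) :
    Tendsto (fun m ↦ (x m : ℝ) / n m) atTop (nhds a) := by
  refine tendsto_of_tendsto_of_dist hs (squeeze_zero' (.of_forall fun _ ↦ dist_nonneg) ?_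
    (tendsto_const_div_natCast hn 1))
  filter_upwards [hx, hn.eventually_gt_atTop 0] with m hx hm
  have hm' : (0 : ℝ) < n m := mod_cast hm
  have hfrac : (x m : ℝ) / n m - s m = (x m - n m * s m) / n m := by field_simp
  rw [dist_comm, Real.dist_eq, hfrac, abs_div, abs_of_pos hm']
  gcongr

theorem IsDiscretization.bulk_le {n t k R : ℕ} {c E V l : ℝ} {s : ℕ → ℝ} {w : ℕ → ℤ}
    (hw : IsDiscretization n t k R c E s w) (hn : 0 < n) (hV : rowVar s R ≤ V)
    (hl : ((partialRows 1 s R).card : ℝ) ≤ n * l) :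
    1 / (n : ℝ) * (2 * (partialRows (n : ℤ) w R).card + (1 + 2 / n) * (rowVar w R : ℤ) + 3) ≤
      2 * (l + 1 / n + R / n * (E / n ^ 2) / (c / n ^ 2)) +
        (1 + 2 / n) * (V + 3 / n + 2 * (E / n ^ 2) / (R / n - 2 / n)) + 3 / n := by
  have hn' : (0 : ℝ) < n := mod_cast hn
  have hpartial := hw.partialRows_le.trans (add_le_add_left (add_le_add_left hl 1) _)
  have hvar := hw.rowVar_le.trans (add_le_add_left (add_le_add_left
    (mul_le_mul_of_nonneg_left hV hn'.le) 3) _)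
  have hpartial_eq : R / n * (E / n ^ 2) / (c / n ^ 2) = R * E / c / n := by
    rw [mul_div_assoc, div_div_div_cancel_right₀ (pow_pos hn' 2).ne']
    ring
  have hvar_eq : 2 * (E / n ^ 2) / (R / n - 2 / n) = 2 * E / (R - 2) / n := by
    rw [← sub_div, ← mul_div_assoc, sq, ← div_div, div_div_div_cancel_right₀ hn'.ne',
      div_right_comm]
  calc _ ≤ 1 / (n : ℝ) * (2 * (n * l + 1 + R * E / c) +
        (1 + 2 / n) * (n * V + 3 + 2 * E / (R - 2)) + 3) := by gcongr
    _ = _ := by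
      rw [hpartial_eq, hvar_eq]
      field_simp

theorem exists_isRecoveryFilling (hL : 0 < L) (hv : MapsTo v (Ioo 0 L) (Icc 0 1))
    (hbv : BoundedVariationOn v (Ioo 0 L)) (hint : ∫ x in Ioo 0 L, v x ∈ Ioo 0 L)
    (ha : Tendsto v (nhdsWithin 0 (Ioo 0 L)) (nhds a))
    (hb : Tendsto v (nhdsWithin L (Ioo 0 L)) (nhds b)) (hn : Tendsto n atTop atTop)
    (hk : Tendsto (fun m ↦ (k m : ℝ) / (n m : ℝ) ^ 2) atTop (nhds (∫ x in Ioo 0 L, v x))) :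
    ∃ w, IsRecoveryFilling L v a b n k w := by
  obtain ⟨w, c, c₀, hc₀, hc, hw⟩ := exists_isDiscretization_rowSample hL hv hn hint hk
  have hE := tendsto_discretization_error hL hv hbv hn hk
  have hR := hn.eventually (eventually_le_floor_mul hL 3)
  have hfirst := (tendsto_rowSample_zero hL ha).comp hn
  have hlast := (tendsto_rowSample_last hL hb).comp hn
  have hrows := tendsto_natFloor_const_mul_div hn hL.le
  have hinv := tendsto_const_div_natCast hn
  have hpartial := ((hinv 1).const_add (volume.real {x ∈ Ioo 0 L | 0 < v x ∧ v x < 1})).add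
    ((hrows.mul hE).div hc hc₀.ne')
  have hvar := ((hinv 3).const_add (eVariationOn v (Ioo 0 L)).toReal).add
    ((hE.const_mul 2).div (hrows.sub (hinv 2)) (by simpa using hL.ne'))
  have hbound := ((hpartial.const_mul 2).add (((hinv 2).const_add 1).mul hvar)).add (hinv 3)
  simp only [mul_zero, zero_div, add_zero, one_mul] at hbound
  refine ⟨w, hw.mono fun m h ↦ h.mem_Icc, hw.mono fun m h ↦ h.count,
    tendsto_div_of_abs_sub_mul_le_one hn hfirst (hw.mono fun m h ↦ h.end_near 0 (by simp)),
    tendsto_div_of_abs_sub_mul_le_one hn hlast ?_, tendsto_div_of_abs_sub_mul_le_one hn hlast ?_,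
    ?_, _, hbound, ?_⟩
  · filter_upwards [hw, hR] with m h hR
    exact h.end_near _ (by grind)
  · filter_upwards [hw, hR] with m h hR
    rw [Function.comp_apply, ← rowSample_floor_eq_rowSample_pred]
    exact h.end_near _ (by grind)
  · refine squeeze_zero' (.of_forall fun m ↦ by positivity) (hw.mono fun m h ↦ ?_) hE
    gcongr
    exact h.sum_abs_le
  · filter_upwards [hw, hR, hn.eventually_gt_atTop 0] with m h hR hm
    exact h.bulk_le hm (rowVar_rowSample_le hL.le hbv hm (by omega) _)
      (card_partialRows_rowSample_le hL.le hv hm)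

end RecoveryFilling

/-! ### Seam energy and the boundary term -/

section Seam

variable {n : ℕ → ℕ} {a b τ : ℝ}

theorem eventually_lt_iff_of_tendsto_div {x y : ℕ → ℤ} {X Y : ℝ} (hn : Tendsto n atTop atTop)
    (hx : Tendsto (fun m ↦ (x m : ℝ) / n m) atTop (nhds X))
    (hy : Tendsto (fun m ↦ (y m : ℝ) / n m) atTop (nhds Y)) (hne : X ≠ Y) :
    ∀ᶠ m in atTop, x m < y m ↔ X < Y := by
  have lt_of_div_lt {m : ℕ} {i j : ℤ} (hm : 0 < n m) (h : (i : ℝ) / n m < j / n m) : i < j :=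
    Int.cast_lt.1 ((div_lt_div_iff_of_pos_right (c := (n m : ℝ)) (Nat.cast_pos.2 hm)).1 h)
  rcases hne.lt_or_gt with h | h
  · filter_upwards [hx.eventually_lt hy h, hn.eventually_gt_atTop 0] with m hlt hm
    exact iff_of_true (lt_of_div_lt hm hlt) h
  · filter_upwards [hy.eventually_lt hx h, hn.eventually_gt_atTop 0] with m hlt hm
    exact iff_of_false (lt_of_div_lt hm hlt).not_gt h.not_gt

theorem abs_seamTerm_le_one {α : Type*} [AddGroup α] [LinearOrder α] (n t p q q' d : α) :
    |seamTerm n t p q q' d| ≤ 1 := by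
  unfold seamTerm
  split_ifs <;> norm_num

theorem eventually_seamTerm_eq {t : ℕ → ℕ} {d p q q' : ℕ → ℤ} {x : ℝ} (hn : Tendsto n atTop atTop)
    (ht : Tendsto (fun m ↦ (t m : ℝ) / n m) atTop (nhds τ))
    (hd : Tendsto (fun m ↦ (d m : ℝ) / n m) atTop (nhds x))
    (hp : Tendsto (fun m ↦ (p m : ℝ) / n m) atTop (nhds a))
    (hq : Tendsto (fun m ↦ (q m : ℝ) / n m) atTop (nhds b))
    (hq' : Tendsto (fun m ↦ (q' m : ℝ) / n m) atTop (nhds b))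
    (hx1 : x + τ ≠ 1) (hxa : x + τ ≠ a) (hxa' : x + τ ≠ a + 1) (hxb : x ≠ b) :
    ∀ᶠ m in atTop, seamTerm (n m : ℤ) (t m) (p m) (q m) (q' m) (d m) = seamTerm 1 τ a b b x := by
  have hdt : Tendsto (fun m ↦ ((d m + t m : ℤ) : ℝ) / n m) atTop (nhds (x + τ)) := by
    simpa [add_div] using hd.add ht
  have hone : Tendsto (fun m ↦ ((n m : ℤ) : ℝ) / n m) atTop (nhds 1) := by
    refine tendsto_const_nhds.congr' ((hn.eventually_gt_atTop 0).mono fun m hm ↦ ?_)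
    simp [hm.ne']
  have hpn : Tendsto (fun m ↦ ((p m + n m : ℤ) : ℝ) / n m) atTop (nhds (a + 1)) := by
    simpa [add_div] using hp.add hone
  filter_upwards [eventually_lt_iff_of_tendsto_div hn hdt hone hx1,
    eventually_lt_iff_of_tendsto_div hn hdt hp hxa,
    eventually_lt_iff_of_tendsto_div hn hdt hpn hxa',
    eventually_lt_iff_of_tendsto_div hn hd hq hxb,
    eventually_lt_iff_of_tendsto_div hn hd hq' hxb]
    with m h1 ha ha' hb hb'
  simp only [seamTerm, sub_lt_iff_lt_add, h1, ha, ha', hb, hb']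

theorem phi_eq_integral_seamTerm (hτ : τ ∈ Icc 0 1) (ha : a ≤ 1) :
    phi τ a b = ∫ x in (0 : ℝ)..1, seamTerm 1 τ a b b x := by
  set S := symmDiff (Icc (-τ) (a - τ) ∪ Icc (1 - τ) (a + 1 - τ)) (Icc 0 b) with hS
  have hSm : MeasurableSet S :=
    (measurableSet_Icc.union measurableSet_Icc).symmDiff measurableSet_Icc
  have hphi : phi τ a b = ∫ x in Icc (0 : ℝ) 1, S.indicator (fun _ ↦ 1) x := by
    rw [setIntegral_indicator hSm]
    simp [phi, Measure.real, hS]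
  rw [hphi, intervalIntegral.integral_of_le zero_le_one, integral_Icc_eq_integral_Ioc]
  refine setIntegral_congr_ae measurableSet_Ioc ?_
  have hfinite : ({b, a - τ, a + 1 - τ, 1 - τ} : Set ℝ).Finite := by simp
  filter_upwards [measure_eq_zero_iff_ae_notMem.1 (hfinite.measure_zero volume)] with x hx hx01
  simp only [mem_insert_iff, mem_singleton_iff, not_or] at hx
  obtain ⟨hxb, hxa, hxa', hx1⟩ := hx
  have hright : x ∈ Icc 0 b ↔ x < b :=
    ⟨fun h ↦ h.2.lt_of_ne hxb, fun h ↦ ⟨hx01.1.le, h.le⟩⟩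
  have hlt_one (h : x + τ ≤ a) : x + τ < 1 :=
    (h.trans ha).lt_of_ne fun h ↦ hx1 (eq_sub_of_add_eq h)
  have hleft : x ∈ Icc (-τ) (a - τ) ∪ Icc (1 - τ) (a + 1 - τ) ↔
      if x + τ < 1 then x + τ < a else x + τ - 1 < a := by
    have := hx01.1
    have := hτ.1
    grind
  by_cases h : x + τ < 1 <;> simp only [h, if_true, if_false] at hleft <;>
    simp only [seamTerm, h, if_true, if_false, indicator_apply, hS, mem_symmDiff, hleft, hright] <;>
    split_ifs <;> grind

theorem tendsto_sum_seamTerm {t : ℕ → ℕ} {p q q' : ℕ → ℤ} (hn : Tendsto n atTop atTop)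
    (hτ : τ ∈ Icc 0 1) (ha : a ≤ 1)
    (ht : Tendsto (fun m ↦ (t m : ℝ) / n m) atTop (nhds τ))
    (hp : Tendsto (fun m ↦ (p m : ℝ) / n m) atTop (nhds a))
    (hq : Tendsto (fun m ↦ (q m : ℝ) / n m) atTop (nhds b))
    (hq' : Tendsto (fun m ↦ (q' m : ℝ) / n m) atTop (nhds b)) :
    Tendsto (fun m ↦ 1 / (n m : ℝ) *
      ∑ d ∈ Finset.range (n m), seamTerm (n m : ℤ) (t m) (p m) (q m) (q' m) d)
      atTop (nhds (phi τ a b)) := by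
  let G (m d : ℕ) : ℝ := seamTerm (n m : ℤ) (t m) (p m) (q m) (q' m) d
  suffices h : Tendsto (fun m ↦ ∫ x in (0 : ℝ)..1, G m ⌊(n m : ℝ) * x⌋₊) atTop
      (nhds (∫ x in (0 : ℝ)..1, seamTerm 1 τ a b b x)) by
    rw [phi_eq_integral_seamTerm hτ ha]
    refine h.congr' ((hn.eventually_gt_atTop 0).mono fun m hm ↦ ?_)
    have hm' : (n m : ℝ) ≠ 0 := mod_cast hm.ne'
    have hfloor := integral_comp_floor_mul (G m) hm' (n m)
    rwa [div_self hm', smul_eq_mul, ← one_div] at hfloor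
  refine intervalIntegral.tendsto_integral_filter_of_dominated_convergence (fun _ ↦ 1)
    (.of_forall fun m ↦ (measurable_comp_floor_mul (G m) _).aestronglyMeasurable)
    (.of_forall fun m ↦ .of_forall fun x _ ↦ abs_seamTerm_le_one _ _ _ _ _ _)
    intervalIntegrable_const ?_
  have hfinite : ({b, a - τ, a + 1 - τ, 1 - τ} : Set ℝ).Finite := by simp
  filter_upwards [measure_eq_zero_iff_ae_notMem.1 (hfinite.measure_zero volume)] with x hx hx01
  simp only [mem_insert_iff, mem_singleton_iff, not_or] at hx
  obtain ⟨hxb, hxa, hxa', hx1⟩ := hx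
  rw [uIoc_of_le zero_le_one] at hx01
  refine tendsto_const_nhds.congr' ((eventually_seamTerm_eq hn ht ?_ hp hq hq'
    (by grind) (by grind) (by grind) hxb).mono fun m h ↦ h.symm)
  simpa [mul_comm] using tendsto_natFloor_const_mul_div hn hx01.1.le

end Seam

/-! ### Weak-* convergence -/

theorem abs_integral_mul_sub_integral_mul_le {α : Type*} [MeasurableSpace α] {μ : Measure α}
    {f g h : α → ℝ} {C : ℝ} (hf : AEStronglyMeasurable f μ) (hC : ∀ᵐ x ∂μ, |f x| ≤ C)
    (hg : Integrable g μ) (hh : Integrable h μ) :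
    |∫ x, f x * g x ∂μ - ∫ x, f x * h x ∂μ| ≤ C * ∫ x, |g x - h x| ∂μ := by
  rw [← integral_sub (hg.bdd_mul hf hC) (hh.bdd_mul hf hC), ← integral_const_mul]
  refine norm_integral_le_of_norm_le (f := fun x ↦ f x * g x - f x * h x)
    ((hg.sub hh).abs.const_mul C) (hC.mono fun x hx ↦ ?_)
  rw [← mul_sub, norm_mul]
  exact mul_le_mul_of_nonneg_right hx (abs_nonneg _)

theorem weakStarTo_of_forall_continuous {I : Set ℝ} {U : ℕ → ℝ → ℝ} {v : ℝ → ℝ} {C : ℝ}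
    (hU : ∀ m, AEStronglyMeasurable (U m) (volume.restrict I))
    (hv : AEStronglyMeasurable v (volume.restrict I))
    (hUC : ∀ m, ∀ᵐ x ∂volume.restrict I, |U m x| ≤ C)
    (hvC : ∀ᵐ x ∂volume.restrict I, |v x| ≤ C)
    (hlim : ∀ h : ℝ → ℝ, Continuous h →
      Tendsto (fun m ↦ ∫ x in I, U m x * h x) atTop (nhds (∫ x in I, v x * h x))) :
    WeakStarTo I U v := by
  intro g hg
  refine Metric.tendsto_atTop'.2 fun ε hε ↦ ?_
  obtain ⟨h, -, hgh, hcont, hh⟩ := hg.exists_hasCompactSupport_integral_sub_le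
    (show 0 < ε / (3 * (|C| + 1)) by positivity)
  have approx {f : ℝ → ℝ} (hf : AEStronglyMeasurable f (volume.restrict I))
      (hfC : ∀ᵐ x ∂volume.restrict I, |f x| ≤ C) :
      dist (∫ x in I, f x * g x) (∫ x in I, f x * h x) ≤ ε / 3 := by
    refine (abs_integral_mul_sub_integral_mul_le hf (hfC.mono fun x hx ↦ ?_) hg hh).trans
      ((mul_le_mul_of_nonneg_left hgh (show 0 ≤ |C| + 1 by positivity)).trans_eq ?_)
    · linarith [le_abs_self C]
    · field_simp
  obtain ⟨N, hN⟩ := Metric.tendsto_atTop'.1 (hlim h hcont) (ε / 3) (by positivity)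
  refine ⟨N, fun m hm ↦ (dist_triangle4 _ (∫ x in I, U m x * h x) (∫ x in I, v x * h x) _).trans_lt
    ?_⟩
  rw [dist_comm _ (∫ x in I, v x * g x)]
  linarith [approx (hU m) (hUC m), approx hv hvC, hN m hm]

section StepFunction

variable {L : ℝ} {n k : ℕ} {u : ℕ → ℝ}

theorem abs_stepFun_le_one (hu : AdmDisc L n k u) (x : ℝ) : |stepFun n u x| ≤ 1 := by
  rw [stepFun]
  by_cases hi : ⌈(n : ℝ) ^ 2 * x⌉.toNat ∈ Finset.Icc 1 ⌊L * (n : ℝ) ^ 2⌋₊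
  · rcases hu.1 _ hi with h | h <;> simp [h]
  · simp [hu.2.1 _ hi]

theorem measurable_stepFun (n : ℕ) (u : ℕ → ℝ) : Measurable (stepFun n u) :=
  (Measurable.of_discrete (f := fun z : ℤ ↦ u z.toNat)).comp
    (Int.measurable_ceil.comp (measurable_const_mul _))

theorem stepFun_ae_eq (hn : 0 < n) (u : ℕ → ℝ) :
    ∀ᵐ x, 0 < x → stepFun n u x = u (⌊(n : ℝ) ^ 2 * x⌋₊ + 1) := by
  have hcount : (range fun j : ℕ ↦ (j : ℝ) / n ^ 2).Countable := countable_range _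
  filter_upwards [hcount.ae_notMem volume] with x hx hx0
  have hfloor : (⌊(n : ℝ) ^ 2 * x⌋₊ : ℝ) < n ^ 2 * x := by
    refine (Nat.floor_le (by positivity)).lt_of_ne fun h ↦ hx ⟨⌊(n : ℝ) ^ 2 * x⌋₊, ?_⟩
    simp only [h]
    field_simp
  rw [stepFun, Int.ceil_toNat, (Nat.ceil_eq_iff (Nat.succ_ne_zero _)).2]
  exact ⟨by simpa using hfloor, by simpa using (Nat.lt_floor_add_one _).le⟩

theorem integral_stepFun_mul (hn : 0 < n) (u g : ℕ → ℝ) (R : ℕ) :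
    ∫ x in (0 : ℝ)..(R / n), stepFun n u x * g ⌊(n : ℝ) * x⌋₊ =
      1 / (n : ℝ) ^ 2 * ∑ r ∈ Finset.range R, (∑ c ∈ Finset.range n, u (n * r + c + 1)) * g r := by
  have hn' : (n : ℝ) ≠ 0 := mod_cast hn.ne'
  have hfloor (x : ℝ) : ⌊(n : ℝ) * x⌋₊ = ⌊(n : ℝ) ^ 2 * x⌋₊ / n := by
    rw [← Nat.floor_div_natCast]
    congr 1
    field_simp
  have hend : (R : ℝ) / n = (n * R : ℕ) / n ^ 2 := by
    push_cast
    field_simp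
  calc _ = ∫ x in (0 : ℝ)..((n * R : ℕ) / n ^ 2),
        (fun j ↦ u (j + 1) * g (j / n)) ⌊(n : ℝ) ^ 2 * x⌋₊ := by
        rw [hend]
        refine intervalIntegral.integral_congr_ae ((stepFun_ae_eq hn u).mono fun x hx hx0 ↦ ?_)
        rw [uIoc_of_le (by positivity)] at hx0
        simp only [hx hx0.1, hfloor]
    _ = 1 / (n : ℝ) ^ 2 * ∑ j ∈ Finset.range (n * R + 0), u (j + 1) * g (j / n) := by
        rw [integral_comp_floor_mul (fun j ↦ u (j + 1) * g (j / n)) (pow_ne_zero 2 hn'),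
          smul_eq_mul, one_div, add_zero]
    _ = _ := by
        rw [sum_range_mul_add, Finset.sum_range_zero, add_zero]
        refine congrArg _ (Finset.sum_congr rfl fun r _ ↦ ?_)
        rw [Finset.sum_mul]
        refine Finset.sum_congr rfl fun c hc ↦ ?_
        rw [Nat.mul_add_div hn, Nat.div_eq_of_lt (Finset.mem_range.1 hc), add_zero]

theorem integral_stepFun_rowSpin_mul_rowStep (hL : 0 ≤ L) (hn : 0 < n) {w : ℕ → ℤ} {N : ℕ}
    (hw : ∀ r, w r ∈ Icc (0 : ℤ) n) (hN : n * ⌊L * n⌋₊ ≤ N) (h : ℝ → ℝ) :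
    ∫ x in Ioo 0 L, stepFun n (rowSpin n N w) x * rowStep L h n x =
      1 / (n : ℝ) ^ 2 * ∑ r ∈ Finset.range ⌊L * n⌋₊, w r * h (r / n) := by
  rw [setIntegral_mul_rowStep hL, integral_stepFun_mul hn _ fun r ↦ h (r / n)]
  refine congrArg _ (Finset.sum_congr rfl fun r hr ↦ congrArg (· * _) ?_)
  have hrow : n * (r + 1) ≤ N :=
    (Nat.mul_le_mul_left n (Finset.mem_range.1 hr)).trans hN
  calc _ = ∑ c ∈ Finset.range n, rightFill n (w r) c := by
        refine Finset.sum_congr rfl fun c hc ↦ ?_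
        have hc := Finset.mem_range.1 hc
        rw [rowSpin_add_one w (by rw [Nat.mul_succ] at hrow; omega), rowSite_mul_add w r hc]
    _ = w r := by
        rw [sum_rightFill (hw r).2, add_sub_cancel_right, max_eq_right (hw r).1]

theorem tendsto_integral_abs_sub_rowStep (hL : 0 ≤ L) {h : ℝ → ℝ} (hh : Continuous h) :
    Tendsto (fun n ↦ ∫ x in Ioo 0 L, |h x - rowStep L h n x|) atTop (nhds 0) := by
  obtain ⟨M, hM⟩ := exists_abs_rowStep_le hL hh
  suffices Tendsto (fun n ↦ ∫ x in Ioo 0 L, |h x - rowStep L h n x|) atTop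
      (nhds (∫ _ in Ioo 0 L, (0 : ℝ))) by simpa only [integral_zero] using this
  refine tendsto_integral_filter_of_dominated_convergence (fun _ ↦ M + M)
    (.of_forall fun n ↦ (hh.measurable.sub (measurable_rowStep L h n)).abs.aestronglyMeasurable)
    (.of_forall fun n ↦ ?_) (integrableOn_const (by simp)) ?_ <;>
    filter_upwards [ae_restrict_mem measurableSet_Ioo] with x hx
  · have hbound : |h x| ≤ M := le_of_tendsto' (tendsto_rowStep hh hx).abs fun n ↦ hM n x
    rw [Real.norm_eq_abs, abs_abs]
    exact (abs_sub _ _).trans (add_le_add hbound (hM n x))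
  · simpa using ((tendsto_rowStep hh hx).const_sub (h x)).abs

end StepFunction

section WeakStar

variable {L a b : ℝ} {v : ℝ → ℝ} {n k : ℕ → ℕ} {w : ℕ → ℕ → ℤ} {u : ℕ → ℕ → ℝ}

theorem IsRecoveryFilling.tendsto_sum_mul (hw : IsRecoveryFilling L v a b n k w) (hL : 0 < L)
    (hv : MapsTo v (Ioo 0 L) (Icc 0 1)) (hbv : BoundedVariationOn v (Ioo 0 L))
    (hn : Tendsto n atTop atTop) {h : ℝ → ℝ} (hh : Continuous h) :
    Tendsto (fun m ↦ 1 / (n m : ℝ) ^ 2 * ∑ r ∈ Finset.range ⌊L * n m⌋₊, w m r * h (r / n m))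
      atTop (nhds (∫ x in Ioo 0 L, v x * h x)) := by
  obtain ⟨M, hM⟩ := (isCompact_Icc (a := 0) (b := L)).exists_bound_of_continuousOn hh.continuousOn
  refine tendsto_of_tendsto_of_dist ((tendsto_sum_rowSample_mul hL hv hbv hh).comp hn)
    (squeeze_zero' (.of_forall fun _ ↦ dist_nonneg) ?_
      (by simpa using hw.tendsto_error.mul_const M))
  filter_upwards [hn.eventually_gt_atTop 0] with m hm
  have hbound {r : ℕ} (hr : r ∈ Finset.range ⌊L * n m⌋₊) : |h (r / n m)| ≤ M := by
    refine hM _ ⟨by positivity, le_trans ?_ (floor_mul_div_le hL.le (n m))⟩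
    gcongr
    exact (Finset.mem_range.1 hr).le
  have hdiff : 1 / (n m : ℝ) ^ 2 * ∑ r ∈ Finset.range ⌊L * n m⌋₊, w m r * h (r / n m) -
      1 / n m * ∑ r ∈ Finset.range ⌊L * n m⌋₊, rowSample L v (n m) r * h (r / n m) =
      (∑ r ∈ Finset.range ⌊L * n m⌋₊, (w m r - n m * rowSample L v (n m) r) * h (r / n m)) /
        (n m : ℝ) ^ 2 := by
    simp only [sub_mul, Finset.sum_sub_distrib, mul_assoc, ← Finset.mul_sum]
    field_simp
  rw [dist_comm, Real.dist_eq, Function.comp_apply, hdiff, abs_div,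
    abs_of_nonneg (sq_nonneg (n m : ℝ)), div_mul_eq_mul_div, Finset.sum_mul]
  refine div_le_div_of_nonneg_right ?_ (sq_nonneg _)
  refine (Finset.abs_sum_le_sum_abs _ _).trans (Finset.sum_le_sum fun r hr ↦ ?_)
  rw [abs_mul]
  exact mul_le_mul_of_nonneg_left (hbound hr) (abs_nonneg _)

theorem IsRecoveryFilling.weakStarTo (hw : IsRecoveryFilling L v a b n k w) (hL : 0 < L)
    (hv : MapsTo v (Ioo 0 L) (Icc 0 1)) (hbv : BoundedVariationOn v (Ioo 0 L))
    (hn : Tendsto n atTop atTop) (hu : ∀ m, AdmDisc L (n m) (k m) (u m))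
    (heq : ∀ᶠ m in atTop, u m = rowSpin (n m) ⌊L * (n m : ℝ) ^ 2⌋₊ (w m)) :
    WeakStarTo (Ioo 0 L) (fun m ↦ stepFun (n m) (u m)) v := by
  have hmeas (m : ℕ) := (measurable_stepFun (n m) (u m)).aestronglyMeasurable
    (μ := volume.restrict (Ioo 0 L))
  have hle (m : ℕ) := ae_of_all (volume.restrict (Ioo 0 L)) (abs_stepFun_le_one (hu m))
  have hv_meas : AEStronglyMeasurable v (volume.restrict (Ioo 0 L)) :=
    aestronglyMeasurable_of_tendsto_ae atTop
      (fun n : ℕ ↦ (measurable_comp_floor_mul (rowSample L v n) n).aestronglyMeasurable)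
      (ae_tendsto_rowSample_floor hbv)
  refine weakStarTo_of_forall_continuous hmeas hv_meas hle ?_ fun h hh ↦ ?_
  · filter_upwards [ae_restrict_mem measurableSet_Ioo] with x hx
    exact abs_le.2 ⟨by linarith [(hv hx).1], (hv hx).2⟩
  have hstep : Tendsto (fun m ↦ ∫ x in Ioo 0 L, stepFun (n m) (u m) x * rowStep L h (n m) x)
      atTop (nhds (∫ x in Ioo 0 L, v x * h x)) := by
    refine (hw.tendsto_sum_mul hL hv hbv hn hh).congr' ?_
    filter_upwards [heq, hw.mem_Icc, hn.eventually_gt_atTop 0] with m heq hm hn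
    rw [heq, integral_stepFun_rowSpin_mul_rowStep hL.le hn hm
      (by rw [floor_mul_sq_eq hL.le]; exact Nat.le_add_right _ _)]
  obtain ⟨M, hM⟩ := exists_abs_rowStep_le hL.le hh
  have hh_int : IntegrableOn h (Ioo 0 L) := hh.integrableOn_Ioc.mono_set Ioo_subset_Ioc_self
  have hrow_int (n : ℕ) : IntegrableOn (rowStep L h n) (Ioo 0 L) :=
    .of_bound (by simp) (measurable_rowStep L h n).aestronglyMeasurable M (ae_of_all _ (hM n))
  refine tendsto_of_tendsto_of_dist hstep (squeeze_zero (fun _ ↦ dist_nonneg) (fun m ↦ ?_)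
    ((tendsto_integral_abs_sub_rowStep hL.le hh).comp hn))
  rw [dist_comm, Real.dist_eq]
  simpa using abs_integral_mul_sub_integral_mul_le (hmeas m) (hle m) hh_int (hrow_int (n m))

end WeakStar

/-! ### Recovery sequence -/

theorem exists_admDisc {L : ℝ} {n k : ℕ} (hk : k ≤ ⌊L * (n : ℝ) ^ 2⌋₊) : ∃ u, AdmDisc L n k u := by
  obtain ⟨s, hs, hcard⟩ := Finset.exists_subset_card_eq
    (s := Finset.Icc 1 ⌊L * (n : ℝ) ^ 2⌋₊) (by simpa using hk)
  refine ⟨fun i ↦ if i ∈ s then 1 else 0, fun i _ ↦ (ite_eq_or_eq _ _ _).symm,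
    fun i hi ↦ if_neg fun his ↦ hi (hs his), ?_⟩
  simpa [Finset.filter_mem_eq_inter, Finset.inter_eq_right.2 hs] using hcard

theorem exists_admDisc_eventually_eq {ι : Type*} {l : Filter ι} {L : ℝ} {n k : ι → ℕ}
    {U : ι → ℕ → ℝ} (hk : ∀ m, k m ≤ ⌊L * (n m : ℝ) ^ 2⌋₊)
    (hU : ∀ᶠ m in l, AdmDisc L (n m) (k m) (U m)) :
    ∃ u : ι → ℕ → ℝ, (∀ m, AdmDisc L (n m) (k m) (u m)) ∧ ∀ᶠ m in l, u m = U m := by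
  choose u₀ hu₀ using fun m ↦ exists_admDisc (hk m)
  refine ⟨fun m ↦ if AdmDisc L (n m) (k m) (U m) then U m else u₀ m, fun m ↦ ?_,
    hU.mono fun m hm ↦ if_pos hm⟩
  dsimp only
  split_ifs with hm
  exacts [hm, hu₀ m]

theorem ofReal_two_mul_add_add {φ : ℝ} {μ V : ℝ≥0∞} (hμ : μ ≠ ∞) (hV : V ≠ ∞) (hφ : 0 ≤ φ) :
    ENNReal.ofReal (2 * μ.toReal + V.toReal + φ) = 2 * μ + V + ENNReal.ofReal φ := by
  rw [ENNReal.ofReal_add (by positivity) hφ, ENNReal.ofReal_add (by positivity) (by positivity),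
    ENNReal.ofReal_mul zero_le_two, ENNReal.ofReal_toReal hμ, ENNReal.ofReal_toReal hV,
    ENNReal.ofReal_ofNat]

section Recovery

variable {L τ a b : ℝ} {v : ℝ → ℝ} {n k : ℕ → ℕ} {w : ℕ → ℕ → ℤ} {u : ℕ → ℕ → ℝ}

theorem IsRecoveryFilling.eventually_admDisc (hw : IsRecoveryFilling L v a b n k w) (hL : 0 ≤ L)
    (hn : Tendsto n atTop atTop) :
    ∀ᶠ m in atTop,
      AdmDisc L (n m) (k m) (rowSpin (n m) ⌊L * (n m : ℝ) ^ 2⌋₊ (w m)) := by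
  filter_upwards [hw.mem_Icc, hw.count, hn.eventually_gt_atTop 0] with m hIcc hcount hm
  rw [floor_mul_sq_eq hL]
  exact admDisc_rowSpin (floor_mul_sq_eq hL _) (overhang_lt hL hm).le hIcc hcount

theorem IsRecoveryFilling.exists_energyPer_le (hw : IsRecoveryFilling L v a b n k w) (hL : 0 < L)
    (hn : Tendsto n atTop atTop) (hτ : τ ∈ Icc 0 1) (ha : a ≤ 1)
    (htau : Tendsto (fun m ↦ tauSeq L (n m)) atTop (nhds τ)) :
    ∃ B : ℕ → ℝ,
      Tendsto B atTop (nhds (2 * volume.real {x ∈ Ioo 0 L | 0 < v x ∧ v x < 1} +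
        (eVariationOn v (Ioo 0 L)).toReal + phi τ a b)) ∧
      ∀ᶠ m in atTop, energyPer L (n m) (rowSpin (n m) ⌊L * (n m : ℝ) ^ 2⌋₊ (w m)) ≤ B m := by
  obtain ⟨B, hB, hle⟩ := hw.bulk_le
  have ht : Tendsto (fun m ↦ (overhang L (n m) : ℝ) / n m) atTop (nhds τ) := by
    simpa only [overhang_div L hL.le] using htau
  refine ⟨_, hB.add (tendsto_sum_seamTerm hn hτ ha ht hw.tendsto_first hw.tendsto_last
    hw.tendsto_overhang), ?_⟩
  filter_upwards [hle, hw.mem_Icc, hn.eventually_gt_atTop 0,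
    hn.eventually (eventually_le_floor_mul hL 2)] with m hle hIcc hm hR
  rw [floor_mul_sq_eq hL.le]
  refine (energyPer_rowSpin_le (floor_mul_sq_eq hL.le _) hR (overhang_lt hL.le hm) hIcc).trans ?_
  rw [mul_add]
  gcongr

theorem IsRecoveryFilling.limsup_energyPer_le (hw : IsRecoveryFilling L v a b n k w) (hL : 0 < L)
    (hbv : BoundedVariationOn v (Ioo 0 L)) (hn : Tendsto n atTop atTop) (hτ : τ ∈ Icc 0 1)
    (ha : a ≤ 1) (htau : Tendsto (fun m ↦ tauSeq L (n m)) atTop (nhds τ))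
    (hu : ∀ᶠ m in atTop, u m = rowSpin (n m) ⌊L * (n m : ℝ) ^ 2⌋₊ (w m)) :
    limsup (fun m ↦ ENNReal.ofReal (energyPer L (n m) (u m))) atTop ≤
      2 * volume {x ∈ Ioo 0 L | 0 < v x ∧ v x < 1} + eVariationOn v (Ioo 0 L) +
        ENNReal.ofReal (phi τ a b) := by
  obtain ⟨B, hB, hle⟩ := hw.exists_energyPer_le hL hn hτ ha htau
  have hfin : volume {x ∈ Ioo 0 L | 0 < v x ∧ v x < 1} ≠ ∞ :=
    measure_ne_top_of_subset (sep_subset _ _) (by simp)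
  have hphi : 0 ≤ phi τ a b := ENNReal.toReal_nonneg
  rw [← ofReal_two_mul_add_add hfin hbv hphi, ← measureReal_def,
    ← (ENNReal.tendsto_ofReal hB).limsup_eq]
  refine limsup_le_limsup ?_
  filter_upwards [hu, hle] with m hu hle
  rw [hu]
  exact ENNReal.ofReal_le_ofReal hle

end Recovery

theorem le_of_tendsto_nhdsWithin_Ioo {L a c : ℝ} {v : ℝ → ℝ} (hL : 0 < L)
    (hv : ∀ x ∈ Ioo 0 L, v x ≤ c) (ha : Tendsto v (nhdsWithin 0 (Ioo 0 L)) (nhds a)) : a ≤ c := by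
  have : (nhdsWithin 0 (Ioo 0 L)).NeBot := left_nhdsWithin_Ioo_neBot hL
  exact le_of_tendsto ha (eventually_mem_nhdsWithin.mono hv)

/-- Upper bound (recovery sequence) for the periodic spin energy. -/
theorem periodic_limsup_upper_bound
    (L σ τ : ℝ) (hL : 0 < L) (hσ : σ ∈ Set.Ioo (0 : ℝ) 1) (hτ : τ ∈ Set.Icc (0 : ℝ) 1)
    (nseq : ℕ → ℕ) (hmono : StrictMono nseq)
    (htau : Tendsto (fun m => tauSeq L (nseq m)) atTop (nhds τ))
    (k : ℕ → ℕ) (hk : ∀ m, k m ≤ Nat.floor (L * (nseq m : ℝ) ^ 2))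
    (hklim : Tendsto (fun m => (k m : ℝ) / (L * (nseq m : ℝ) ^ 2)) atTop (nhds σ))
    (v : ℝ → ℝ)
    (hrange : ∀ x ∈ Set.Ioo 0 L, 0 ≤ v x ∧ v x ≤ 1)
    (hbv : BoundedVariationOn v (Set.Ioo 0 L))
    (hint : (∫ x in Set.Ioo 0 L, v x) = σ * L)
    (a b : ℝ)
    (ha : Tendsto v (nhdsWithin 0 (Set.Ioo 0 L)) (nhds a))
    (hb : Tendsto v (nhdsWithin L (Set.Ioo 0 L)) (nhds b)) :
    ∃ u : ℕ → ℕ → ℝ,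
      (∀ m, AdmDisc L (nseq m) (k m) (u m)) ∧
      WeakStarTo (Set.Ioo 0 L) (fun m => stepFun (nseq m) (u m)) v ∧
      Filter.limsup (fun m => ENNReal.ofReal (energyPer L (nseq m) (u m))) atTop ≤
        2 * volume {x ∈ Set.Ioo 0 L | 0 < v x ∧ v x < 1} + eVariationOn v (Set.Ioo 0 L) +
          ENNReal.ofReal (phi τ a b) := by
  have hn : Tendsto nseq atTop atTop := hmono.tendsto_atTop
  have hmass : ∫ x in Ioo 0 L, v x ∈ Ioo 0 L := by
    rw [hint]
    exact ⟨mul_pos hσ.1 hL, mul_lt_of_lt_one_left hL hσ.2⟩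
  have hdensity : Tendsto (fun m ↦ (k m : ℝ) / (nseq m : ℝ) ^ 2) atTop
      (nhds (∫ x in Ioo 0 L, v x)) := by
    rw [hint]
    refine (hklim.mul_const L).congr fun m ↦ ?_
    field_simp
  have ha1 : a ≤ 1 := le_of_tendsto_nhdsWithin_Ioo hL (fun x hx ↦ (hrange x hx).2) ha
  obtain ⟨w, hw⟩ := exists_isRecoveryFilling hL hrange hbv hmass ha hb hn hdensity
  obtain ⟨u, hadm, hu⟩ := exists_admDisc_eventually_eq hk (hw.eventually_admDisc hL.le hn)
  exact ⟨u, hadm, hw.weakStarTo hL hrange hbv hn hadm hu,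
    hw.limsup_energyPer_le hL hbv hn hτ ha1 htau hu⟩
end
end
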